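/- Let b ≥ 2 and k > 2b be integers and let 𝒜 = {A_1, …, A_n} be subsets of ℝ² with f_{k+1}(𝒜) = 0 and such that for every σ with |σ| ∈ {k, k+1} the set A_σ is open (possibly empty) and has at most b path-connected components. For every σ ⊆ {1, …, n} with |σ| = k+1 and A_σ ≠ ∅ choose b distinct points of A_σ that include at least one point from each path-connected component of A_σ; let W be the set of all chosen points, so |W| = b·f_k(𝒜). Then one can choose, for every k-element τ ⊆ {1, …, n} having at least one chosen point in A_τ, a forest G_τ on the chosen points lying in A_τ whose restriction to each path-connected component of A_τ is a tree on the chosen points in that component, together with a drawing of G_τ inside A_τ, such that the multigraph G on vertex set W formed by the union of all G_τ admits a crossing-free drawing inside ⋃𝒜 (so G is a planar multigraph) and moreover |E(G)| ≤ 3·|W| + k·(b−1)·f_k(𝒜). -/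

import Mathlib

/-- `NerveTop A k` is the set of index sets `σ` with `|σ| = k+1` and `⋂ i ∈ σ, A i ≠ ∅`,
i.e. the `k`-dimensional faces of the nerve of `𝒜`. -/
abbrev NerveTop {α : Type*} {n : ℕ} (A : Fin n → Set α) (k : ℕ) : Type _ :=
  {σ : Finset (Fin n) // σ.card = k + 1 ∧ (⋂ i ∈ σ, A i).Nonempty}

/-- `fNum A k` is `f_k(𝒜)`: the number of subsets `σ` of the index set with
`|σ| = k+1` such that `⋂ i ∈ σ, A i` is nonempty. -/
noncomputable def fNum {α : Type*} {n : ℕ} (A : Fin n → Set α) (k : ℕ) : ℕ :=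
  Nat.card (NerveTop A k)

/-- A set `S` has at most `b` path-connected components: there are `b` points such that
every point of `S` can be joined inside `S` to one of them. -/
def AtMostComponents {X : Type*} [TopologicalSpace X] (b : ℕ) (S : Set X) : Prop :=
  ∃ g : Fin b → X, ∀ x ∈ S, ∃ j : Fin b, JoinedIn S x (g j)

/-!
Since `f_{k+1} = 0`, two regions `A_τ ≠ A_τ'` with `#τ = #τ' = k` can meet only inside the face
`A_σ`, `σ = τ ∪ τ'`, and distinct faces are disjoint. Hence every crossing between curves drawn in
different regions lies in one path component of one face, and all regions meeting that component
contain it. Draw in each path component of each region a curve through its chosen points, in general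
position, so that there are only finitely many crossings. The crossings in a component of a face all
lie in one curved disc inside that component, the image of a round disc under a homeomorphism of the
plane, whose centre, the hub, is one of the chosen points. In this disc every arc is rerouted along
radii through the hub. Different radii meet only in the hub, which is a vertex, so the crossings
disappear while the graph of each region stays connected on each of its path components; spanning
forests of these graphs are the required ones.

For the count, give each face one of its `k + 1` facets. An edge between two of the `b` chosen
points of a face is extra if its label is another facet; being in a forest, the extra edges with a
given face and label number at most `b - 1`, so there are at most `k (b - 1)` per face. The other
edges form a simple planar graph. It has at most `3 |V|` edges, since a graph with more edges
contracts to one containing `K₅`, which would contradict a count of turning numbers modulo `4`.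
-/

section ContinuousLogarithm

open Complex unitInterval

/-- `z` is the increment over `[0, 1]` of a continuous logarithm of `f`: its imaginary part is the
angle swept out by `f` around the origin. -/
def IsLogIncrement (f : I → ℂ) (z : ℂ) : Prop :=
  ∃ L : I → ℂ, Continuous L ∧ (∀ t, exp (L t) = f t) ∧ z = L 1 - L 0

theorem exists_continuous_log {X : Type*} [TopologicalSpace X] [SimplyConnectedSpace X]
    [LocallyPathConnectedSpace X] {f : X → ℂ} (hf : Continuous f) (hf₀ : ∀ x, f x ≠ 0) :
    ∃ L : X → ℂ, Continuous L ∧ ∀ x, exp (L x) = f x := by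
  obtain ⟨x₀⟩ : Nonempty X := inferInstance
  obtain ⟨L, ⟨-, hL⟩, -⟩ := isCoveringMapOn_exp.existsUnique_continuousMap_lifts
    ⟨f, hf⟩ (a₀ := x₀) (e₀ := log (f x₀)) (exp_log (hf₀ x₀)) hf₀
  exact ⟨L, L.continuous, congrFun hL⟩

theorem sub_eq_sub_of_exp_eq_exp {X : Type*} [TopologicalSpace X] [PreconnectedSpace X]
    {L M : X → ℂ} (hL : Continuous L) (hM : Continuous M) (h : ∀ t, exp (L t) = exp (M t))
    (s t : X) : L s - L t = M s - M t := by
  choose n hn using fun t => exp_eq_exp_iff_exists_int.1 (h t)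
  have hn_re (t : X) : (n t : ℝ) = ((L t - M t) / (2 * Real.pi * Complex.I)).re := by
    rw [hn t, add_sub_cancel_left, mul_div_assoc, div_self two_pi_I_ne_zero]
    simp
  have hn_cont : Continuous n := by
    refine Int.isClosedEmbedding_coe_real.isInducing.continuous_iff.2 ?_
    simp only [Function.comp_def, hn_re]
    fun_prop
  have hst : n s = n t := PreconnectedSpace.constant inferInstance hn_cont
  linear_combination hn s - hn t + (2 * Real.pi * Complex.I) * congrArg (Int.cast (R := ℂ)) hst

theorem IsLogIncrement.unique {f : I → ℂ} {z z' : ℂ} (hz : IsLogIncrement f z)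
    (hz' : IsLogIncrement f z') : z = z' := by
  obtain ⟨L, hL, hLf, rfl⟩ := hz
  obtain ⟨M, hM, hMf, rfl⟩ := hz'
  exact sub_eq_sub_of_exp_eq_exp hL hM (fun t => (hLf t).trans (hMf t).symm) 1 0

theorem exists_isLogIncrement {f : I → ℂ} (hf : Continuous f) (hf₀ : ∀ t, f t ≠ 0) :
    ∃ z, IsLogIncrement f z := by
  obtain ⟨L, hL, hLf⟩ := exists_continuous_log (hf.comp continuous_projIcc)
    fun t : ℝ => hf₀ (Set.projIcc 0 1 zero_le_one t)
  exact ⟨_, fun t => L t, by fun_prop, fun t => by simp [hLf], rfl⟩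

theorem IsLogIncrement.neg {f : I → ℂ} {z : ℂ} (hz : IsLogIncrement f z) :
    IsLogIncrement (fun t => -f t) z := by
  obtain ⟨L, hL, hLf, rfl⟩ := hz
  refine ⟨fun t => L t + Real.pi * Complex.I, by fun_prop, fun t => ?_, by ring⟩
  rw [exp_add, hLf, exp_pi_mul_I, mul_neg_one]

theorem IsLogIncrement.exp_eq {f : I → ℂ} {z : ℂ} (hz : IsLogIncrement f z) :
    exp z = f 1 / f 0 := by
  obtain ⟨L, -, hLf, rfl⟩ := hz
  rw [exp_sub, hLf, hLf]

theorem IsLogIncrement.add_eq_add_of_disjoint {a b c d : ℂ} {P : Path a b} {Q : Path c d}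
    (hPQ : Disjoint (Set.range P) (Set.range Q)) {x y x' y' : ℂ}
    (hx : IsLogIncrement (fun t => P t - c) x) (hy : IsLogIncrement (fun t => Q t - b) y)
    (hx' : IsLogIncrement (fun t => P t - d) x') (hy' : IsLogIncrement (fun t => Q t - a) y') :
    x + y = x' + y' := by
  obtain ⟨M, hM, hM'⟩ := exists_continuous_log
    (f := fun p : ℝ × ℝ => P.extend p.1 - Q.extend p.2) (by fun_prop)
    fun p => sub_ne_zero.2 (hPQ.ne_of_mem ⟨_, rfl⟩ ⟨_, rfl⟩)
  -- The four sides of the square `[0, 1] × [0, 1]` have well-defined increments, which close up.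
  have hbottom : x = M (1, 0) - M (0, 0) :=
    hx.unique ⟨fun t => M (t, 0), by fun_prop, fun t => by simp [hM'], rfl⟩
  have htop : x' = M (1, 1) - M (0, 1) :=
    hx'.unique ⟨fun t => M (t, 1), by fun_prop, fun t => by simp [hM'], rfl⟩
  have hright : y = M (1, 1) - M (1, 0) :=
    hy.neg.unique ⟨fun t => M (1, t), by fun_prop, fun t => by simp [hM'], rfl⟩
  have hleft : y' = M (0, 1) - M (0, 0) :=
    hy'.neg.unique ⟨fun t => M (0, t), by fun_prop, fun t => by simp [hM'], rfl⟩
  linear_combination hbottom + hright - htop - hleft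

/-- The sign of the pair `(i, j)`, recording which of the two indices comes first. -/
def orderSign {ι : Type*} [LinearOrder ι] (i j : ι) : ℤ := if j < i then 1 else -1

theorem exists_log_sub {ι : Type*} [LinearOrder ι] {r : ι → ℂ} (hr : Function.Injective r) :
    ∃ l : ι → ι → ℂ, ∀ i j, i ≠ j →
      exp (l i j) = r j - r i ∧ l i j - l j i = orderSign i j * (Real.pi * Complex.I) := by
  have hr₀ {i j : ι} (hij : i ≠ j) : r j - r i ≠ 0 := sub_ne_zero.2 (hr.ne hij.symm)
  refine ⟨fun i j => if i < j then log (r j - r i) else log (r i - r j) + Real.pi * Complex.I,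
    fun i j hij => ?_⟩
  rcases hij.lt_or_gt with h | h
  · simp [h, h.not_gt, orderSign, exp_log (hr₀ hij)]
  · simp [h, h.not_gt, orderSign, exp_add, exp_log (hr₀ hij.symm)]

end ContinuousLogarithm

section CompleteGraph

open unitInterval

/-- The `15` relations add up, modulo `4`, to twice the number `5` of crossings in the convex
drawing of `K₅`, since every unknown occurs in exactly two of them. -/
theorem false_of_turning_numbers (n : Fin 5 → Fin 5 → Fin 5 → ℤ)
    (h : ∀ a b c d : Fin 5, [a, b, c, d].Nodup →
      2 * (n c a b + n b c d - n d a b - n a c d) +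
        (orderSign c b + orderSign a c + orderSign b d + orderSign d a) = 0) : False := by
  have h₁ := h 0 1 2 3 (by decide)
  have h₂ := h 0 1 2 4 (by decide)
  have h₃ := h 0 1 3 4 (by decide)
  have h₄ := h 0 2 1 3 (by decide)
  have h₅ := h 0 2 1 4 (by decide)
  have h₆ := h 0 2 3 4 (by decide)
  have h₇ := h 0 3 1 2 (by decide)
  have h₈ := h 0 3 1 4 (by decide)
  have h₉ := h 0 3 2 4 (by decide)
  have h₁₀ := h 0 4 1 2 (by decide)
  have h₁₁ := h 0 4 1 3 (by decide)
  have h₁₂ := h 0 4 2 3 (by decide)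
  have h₁₃ := h 1 2 3 4 (by decide)
  have h₁₄ := h 1 3 2 4 (by decide)
  have h₁₅ := h 1 4 2 3 (by decide)
  simp only [orderSign, Fin.reduceLT, if_true, if_false] at *
  omega

theorem exists_not_disjoint_paths_fin_five (r : Fin 5 → ℂ) (P : ∀ i j, Path (r i) (r j)) :
    ∃ a b c d : Fin 5, [a, b, c, d].Nodup ∧
      ¬ Disjoint (Set.range (P a b)) (Set.range (P c d)) := by
  by_contra! hP
  have hr : Function.Injective r := by
    intro i j hij
    by_contra hne
    obtain ⟨c, d, h⟩ : ∃ c d, [i, c, j, d].Nodup := by clear hij; revert i j; decide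
    exact (hP i c j d h).ne_of_mem ⟨0, (P i c).source⟩ ⟨0, (P j d).source⟩ hij
  have havoid (v a b : Fin 5) (h : [v, a, b].Nodup) (t : I) : P a b t - r v ≠ 0 := by
    obtain ⟨d, hd⟩ : ∃ d, [a, b, v, d].Nodup := by revert v a b; decide
    exact sub_ne_zero.2 ((hP a b v d hd).ne_of_mem ⟨t, rfl⟩ ⟨0, (P v d).source⟩)
  obtain ⟨l, hl⟩ := exists_log_sub hr
  have hn (v a b : Fin 5) : ∃ n : ℤ, [v, a, b].Nodup → IsLogIncrement (fun t => P a b t - r v)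
      (l v b - l v a + n * (2 * Real.pi * Complex.I)) := by
    by_cases h : [v, a, b].Nodup
    · obtain ⟨z, hz⟩ := exists_isLogIncrement (f := fun t => P a b t - r v) (by fun_prop)
        (havoid v a b h)
      have hexp : Complex.exp z = Complex.exp (l v b - l v a) := by
        rw [Complex.exp_sub, (hl v a (by grind)).1, (hl v b (by grind)).1, hz.exp_eq,
          Path.source, Path.target]
      obtain ⟨n, rfl⟩ := Complex.exp_eq_exp_iff_exists_int.1 hexp
      exact ⟨n, fun _ => hz⟩
    · exact ⟨0, fun h' => absurd h' h⟩
  choose n hn using hn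
  refine false_of_turning_numbers n fun a b c d h => ?_
  have hsum := IsLogIncrement.add_eq_add_of_disjoint (hP a b c d h) (hn c a b (by grind))
    (hn b c d (by grind)) (hn d a b (by grind)) (hn a c d (by grind))
  have hzero : ((2 * (n c a b + n b c d - n d a b - n a c d) +
      (orderSign c b + orderSign a c + orderSign b d + orderSign d a) : ℤ) : ℂ) *
        (Real.pi * Complex.I) = 0 := by
    push_cast
    linear_combination hsum - (hl c b (by grind)).2 - (hl a c (by grind)).2
      - (hl b d (by grind)).2 - (hl d a (by grind)).2
  exact_mod_cast (mul_eq_zero.1 hzero).resolve_right (by simp [Real.pi_ne_zero])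

end CompleteGraph

section WeaklyPlanar

open Finset Function

variable {V : Type*} {G H : SimpleGraph V}

/-- A graph is weakly planar if its vertices can be mapped to points, and its edges to sets joining
their end points, in such a way that edges without a common end point are mapped to disjoint sets.
Unlike planarity, this evidently survives the contraction of an edge. -/
def WeaklyPlanar (G : SimpleGraph V) : Prop :=
  ∃ (r : V → ℂ) (Q : V → V → Set ℂ), (∀ u v, G.Adj u v → JoinedIn (Q u v) (r u) (r v)) ∧
    ∀ a b c d, G.Adj a b → G.Adj c d → [a, b, c, d].Nodup → Disjoint (Q a b) (Q c d)

theorem WeaklyPlanar.mono (hHG : H ≤ G) (hG : WeaklyPlanar G) : WeaklyPlanar H := by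
  obtain ⟨r, Q, hjoin, hdisj⟩ := hG
  exact ⟨r, Q, fun u v h => hjoin u v (hHG h), fun a b c d h h' => hdisj a b c d (hHG h) (hHG h')⟩

theorem WeaklyPlanar.cliqueFree (hG : WeaklyPlanar G) : G.CliqueFree 5 := by
  obtain ⟨r, Q, hjoin, hdisj⟩ := hG
  rw [← not_not (a := G.CliqueFree 5), SimpleGraph.not_cliqueFree_iff_top_isContained]
  rintro ⟨f, hf⟩
  have hadj {i j : Fin 5} (hij : i ≠ j) : G.Adj (f i) (f j) := f.map_adj hij
  have hpath (i j : Fin 5) :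
      ∃ P : Path (r (f i)) (r (f j)), i ≠ j → Set.range P ⊆ Q (f i) (f j) := by
    rcases eq_or_ne i j with rfl | hij
    · exact ⟨Path.refl _, fun h => absurd rfl h⟩
    · obtain ⟨P, hP⟩ := hjoin _ _ (hadj hij)
      exact ⟨P, fun _ => Set.range_subset_iff.2 hP⟩
  choose P hP using hpath
  obtain ⟨a, b, c, d, h, hnot⟩ := exists_not_disjoint_paths_fin_five (r ∘ f) P
  exact hnot ((hdisj _ _ _ _ (hadj (by grind)) (hadj (by grind)) (h.map hf)).mono
    (hP a b (by grind)) (hP c d (by grind)))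

theorem WeaklyPlanar.map (hG : WeaklyPlanar G) {f : V → V} (hf : ∀ v, f (f v) = f v)
    (hadj : ∀ v, f v = v ∨ G.Adj (f v) v) : WeaklyPlanar (G.map f) := by
  obtain ⟨r, Q, hjoin, hdisj⟩ := hG
  let Q' (u v : V) : Set ℂ :=
    ⋃ (p) (q) (_ : G.Adj p q ∧ (f p = u ∨ f p = v) ∧ (f q = u ∨ f q = v)), Q p q
  have hQ {p q u v : V} (h : G.Adj p q ∧ (f p = u ∨ f p = v) ∧ (f q = u ∨ f q = v)) :
      JoinedIn (Q' u v) (r p) (r q) :=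
    (hjoin p q h.1).mono fun z hz => by simp only [Q', Set.mem_iUnion]; exact ⟨p, q, h, hz⟩
  refine ⟨r, Q', ?_, fun a b c d _ _ h => ?_⟩
  · rintro _ _ ⟨-, u, v, huv, rfl, rfl⟩
    have hpq : JoinedIn (Q' (f u) (f v)) (r u) (r v) := hQ ⟨huv, by simp⟩
    have hcenter {p : V} (hp : f p = f u ∨ f p = f v)
        (hmem : r p ∈ Q' (f u) (f v)) : JoinedIn (Q' (f u) (f v)) (r (f p)) (r p) := by
      rcases hadj p with h | h
      · rw [h]; exact JoinedIn.refl hmem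
      · exact hQ ⟨h, by rwa [hf], hp⟩
    exact ((hcenter (.inl rfl) hpq.source_mem).trans hpq).trans
      (hcenter (.inr rfl) hpq.target_mem).symm
  · simp only [Q', Set.disjoint_iUnion_left, Set.disjoint_iUnion_right]
    rintro p' q' ⟨hpq', hp', hq'⟩ p q ⟨hpq, hp, hq⟩
    have := hpq.ne
    have := hpq'.ne
    exact (hdisj p' q' p q hpq' hpq (by clear hdisj hQ hadj hjoin Q'; grind)).symm

theorem WeaklyPlanar.contract [DecidableEq V] (hG : WeaklyPlanar G) {x y : V} (hxy : G.Adj x y) :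
    WeaklyPlanar (G.map (update id y x)) := by
  refine hG.map (fun v => ?_) fun v => ?_ <;> rcases eq_or_ne v y with rfl | hv <;>
    simp [hxy.ne, *]

theorem card_le_of_isClique_of_subset_neighborSet {m : ℕ} (hG : G.CliqueFree (m + 2)) {v : V}
    {s : Finset V} (hs : G.IsClique s) (hsv : ↑s ⊆ G.neighborSet v) : #s ≤ m := by
  classical
  by_contra! hlt
  obtain ⟨t, hts, ht⟩ := exists_subset_card_eq (Nat.succ_le_of_lt hlt)
  exact hG _ (SimpleGraph.IsNClique.insert ⟨hs.subset (by simpa using hts), ht⟩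
    fun u hu => hsv (hts hu))

theorem WeaklyPlanar.false_of_subdivided_edge (hG : WeaklyPlanar G) {s : Finset V} {a p c : V}
    (hs : G.IsNClique 3 s) (ha : ∀ u ∈ s, G.Adj a u) (hc : ∀ u ∈ s, G.Adj c u) (hp : p ∉ s)
    (hac : a ≠ c) (hap : G.Adj a p) (hpc : G.Adj p c) : False := by
  classical
  have hcontract {x y : V} (hxy : G.Adj x y) (hx : x ≠ p) (hy : y ≠ p) :
      (G.map (update id p a)).Adj x y := by
    simpa [hx, hy] using SimpleGraph.map_adj_apply' (f := update id p a) hxy (by simp [*, hxy.ne])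
  have hsp {u : V} (hu : u ∈ s) : u ≠ p := fun h => hp (h ▸ hu)
  have hs' : (G.map (update id p a)).IsNClique 3 s :=
    ⟨fun x hx y hy hxy => hcontract (hs.1 hx hy hxy) (hsp hx) (hsp hy), hs.2⟩
  refine (hG.contract hap).cliqueFree _
    ((hs'.insert fun u hu => hcontract (ha u hu) hap.ne (hsp hu)).insert (a := c) fun u hu => ?_)
  rcases mem_insert.1 hu with rfl | hu
  · simpa [hpc.ne'] using
      SimpleGraph.map_adj_apply' (f := update id p u) hpc.symm (by simp [hac.symm, hpc.ne'])
  · exact hcontract (hc u hu) hpc.ne' (hsp hu)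

variable [Fintype V]

open scoped Classical in
theorem card_edgeFinset_le_contract (x y : V) :
    #G.edgeFinset ≤ #(G.map (update id y x)).edgeFinset + 1
      + #(G.neighborFinset x ∩ G.neighborFinset y) := by
  let lost := (insert x (G.neighborFinset x ∩ G.neighborFinset y)).image fun v => s(y, v)
  have hlost : #lost ≤ 1 + #(G.neighborFinset x ∩ G.neighborFinset y) :=
    card_image_le.trans ((card_insert_le _ _).trans_eq (add_comm _ _))
  have hkept : #(G.edgeFinset \ lost) ≤ #(G.map (update id y x)).edgeFinset := by
    refine card_le_card_of_injOn (Sym2.map (update id y x)) ?_ ?_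
    · intro e he
      induction e with | _ u v
      simp only [coe_sdiff, Set.mem_sdiff, mem_coe, SimpleGraph.mem_edgeFinset,
        SimpleGraph.mem_edgeSet, lost, mem_image, not_exists, not_and, mem_insert] at he
      simp only [Sym2.map_mk, mem_coe, SimpleGraph.mem_edgeFinset, SimpleGraph.mem_edgeSet]
      refine SimpleGraph.map_adj_apply' he.1 fun h => ?_
      have := he.2 x (.inl rfl)
      grind [SimpleGraph.Adj.ne, update_apply, Sym2.eq_swap]
    · intro e he e' he' h
      induction e with | _ u v
      induction e' with | _ u' v'
      simp only [coe_sdiff, Set.mem_sdiff, mem_coe, SimpleGraph.mem_edgeFinset,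
        SimpleGraph.mem_edgeSet, lost, mem_image, not_exists, not_and, mem_insert, mem_inter,
        SimpleGraph.mem_neighborFinset] at he he'
      simp only [Sym2.map_mk, Sym2.eq_iff] at h ⊢
      grind [SimpleGraph.Adj.ne, update_apply, Sym2.eq_swap, SimpleGraph.Adj.symm]
  have := le_card_sdiff lost G.edgeFinset
  omega

open scoped Classical in
theorem exists_degree_lt {s : Finset V} {d : ℕ}
    (hs : G.support ⊆ s) (hcard : 2 * #G.edgeFinset < d * #s) : ∃ v ∈ s, G.degree v < d := by
  refine exists_lt_of_sum_lt ?_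
  rw [sum_const, smul_eq_mul, mul_comm, sum_subset (subset_univ s),
    SimpleGraph.sum_degrees_eq_twice_card_edges]
  · exact hcard
  · intro v _ hv
    by_contra h0
    exact hv (hs ((SimpleGraph.degree_pos_iff_mem_support G v).1 (Nat.pos_of_ne_zero h0)))

open scoped Classical in
theorem exists_le_card_edgeFinset_eq {m : ℕ} (hm : m ≤ #G.edgeFinset) :
    ∃ H ≤ G, #H.edgeFinset = m := by
  obtain ⟨s, hsG, rfl⟩ := exists_subset_card_eq hm
  have hs : (SimpleGraph.fromEdgeSet (s : Set (Sym2 V))).edgeSet = s := by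
    rw [SimpleGraph.edgeSet_fromEdgeSet, sdiff_eq_left, Set.disjoint_left]
    exact fun e he => G.not_isDiag_of_mem_edgeSet (SimpleGraph.mem_edgeFinset.1 (hsG he))
  refine ⟨SimpleGraph.fromEdgeSet s, ?_, congrArg card (by ext; simp [hs])⟩
  rw [← SimpleGraph.edgeSet_subset_edgeSet, hs]
  exact fun e he => SimpleGraph.mem_edgeFinset.1 (hsG he)

open scoped Classical in
theorem adj_of_three_le_card_inter {s : Finset V} (hs : #s < 6) {x y z : V}
    (hx : 3 ≤ #(s ∩ G.neighborFinset x)) (hxs : x ∈ s) (hys : y ∈ s) (hzs : z ∈ s)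
    (hxy : x ≠ y) (hxz : x ≠ z) (hyz : y ≠ z) (hnot : ¬ G.Adj x y) : G.Adj x z := by
  by_contra hnot'
  have hsub : s ∩ G.neighborFinset x ⊆ s \ {x, y, z} := by
    intro t
    grind [SimpleGraph.mem_neighborFinset, SimpleGraph.Adj.ne]
  have := hx.trans (card_le_card hsub)
  rw [card_sdiff_of_subset (by grind), card_eq_three.2 ⟨x, y, z, hxy, hxz, hyz, rfl⟩] at this
  omega

open scoped Classical in
theorem exists_not_adj_of_three_le_card_inter {s : Finset V} (hs : s.Nonempty)
    (hclique : ∀ t ⊆ s, G.IsClique t → #t ≤ 3)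
    (hthree : ∀ x ∈ s, 3 ≤ #(s ∩ G.neighborFinset x)) :
    ∃ x ∈ s, ∃ y ∈ s, x ≠ y ∧ ¬ G.Adj x y := by
  by_contra! hadj
  obtain ⟨x, hx⟩ := hs
  have hlt : #(s ∩ G.neighborFinset x) < #s := card_lt_card <| inter_subset_left.ssubset_of_ne
    fun h => G.irrefl ((G.mem_neighborFinset x x).1 (inter_eq_left.1 h hx))
  have := hclique s subset_rfl fun x hx y hy => hadj x hx y hy
  have := hthree x hx
  omega

open scoped Classical in
theorem WeaklyPlanar.exists_card_inter_neighborFinset_lt_three (hG : WeaklyPlanar G) {v : V}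
    (hpos : 0 < G.degree v) (hlt : G.degree v < 6) :
    ∃ x y, G.Adj x y ∧ #(G.neighborFinset x ∩ G.neighborFinset y) < 3 := by
  by_contra! hthree
  let F := G.neighborFinset v
  have hFv {x : V} (hx : x ∈ F) : G.Adj v x := (G.mem_neighborFinset v x).1 hx
  have hthree {x : V} (hx : x ∈ F) : 3 ≤ #(F ∩ G.neighborFinset x) := hthree v x (hFv hx)
  have hclique (s : Finset V) (hsF : s ⊆ F) (hs : G.IsClique s) : #s ≤ 3 :=
    card_le_of_isClique_of_subset_neighborSet hG.cliqueFree hs fun x hx => hFv (hsF hx)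
  have hunique {x y z : V} (hx : x ∈ F) := adj_of_three_le_card_inter
    (y := y) (z := z) (by rwa [G.card_neighborFinset_eq_degree]) (hthree hx) hx
  obtain ⟨a, ha, c, hc, hac, hnac⟩ := exists_not_adj_of_three_le_card_inter
    (card_pos.1 (by rwa [G.card_neighborFinset_eq_degree])) hclique fun x => hthree
  let R := F \ {a, c}
  have hR : 3 ≤ #R := (hthree ha).trans <| card_le_card fun t => by
    grind [SimpleGraph.mem_neighborFinset, SimpleGraph.Adj.ne]
  have haR {x : V} (hx : x ∈ R) : G.Adj a x :=
    hunique ha hc (by grind) hac (by grind) (by grind) hnac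
  have hcR {x : V} (hx : x ∈ R) : G.Adj c x :=
    hunique hc ha (by grind) hac.symm (by grind) (by grind) fun h => hnac h.symm
  obtain ⟨p, hp, q, hq, hpq, hnpq⟩ : ∃ p ∈ R, ∃ q ∈ R, p ≠ q ∧ ¬ G.Adj p q := by
    by_contra! hclR
    have hins : G.IsClique (insert a R : Finset V) := by
      rw [coe_insert, SimpleGraph.isClique_insert]
      exact ⟨fun x hx y hy => hclR x hx y hy, fun x hx _ => haR hx⟩
    have := hclique _ (by grind) hins
    rw [card_insert_of_notMem (by grind)] at this
    omega
  obtain ⟨u, hu, hupq⟩ := exists_mem_notMem_of_card_lt_card (card_le_two.trans_lt hR : #{p, q} < #R)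
  have hqu : G.Adj q u := hunique (x := q) (y := p) (by grind) (by grind) (by grind) hpq.symm
    (by grind) (by grind) fun h => hnpq h.symm
  have hvs : G.IsNClique 3 {v, u, q} :=
    SimpleGraph.is3Clique_triple_iff.2 ⟨hFv (by grind), hFv (by grind), hqu.symm⟩
  refine hG.false_of_subdivided_edge hvs ?_ ?_ ?_ hac (haR hp) (hcR hp).symm
  · simp [(hFv ha).symm, haR hu, haR hq]
  · simp [(hFv hc).symm, hcR hu, hcR hq]
  · have := (hFv (show p ∈ F by grind)).ne'
    grind

open scoped Classical in
theorem WeaklyPlanar.card_edgeFinset_add_two_le (hG : WeaklyPlanar G) {s : Finset V}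
    (hs : s.Nonempty) (hsupp : G.support ⊆ s) : #G.edgeFinset + 2 ≤ 3 * #s := by
  induction s using Finset.strongInduction generalizing G with | _ s ih
  by_contra! hcard
  have := hs.card_pos
  obtain ⟨H, hHG, hH⟩ := exists_le_card_edgeFinset_eq (G := G) (m := 3 * #s - 1) (by omega)
  replace hG := hG.mono hHG
  replace hsupp : H.support ⊆ s := (SimpleGraph.support_mono hHG).trans hsupp
  have hmem {x y : V} (hxy : H.Adj x y) : x ∈ s ∧ y ∈ s :=
    ⟨hsupp ⟨y, hxy⟩, hsupp ⟨x, hxy.symm⟩⟩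
  have hpos : ∀ v ∈ s, 0 < H.degree v := by
    refine fun v hv => (H.degree_pos_iff_mem_support v).2 (by_contra fun hv' => ?_)
    obtain ⟨e, he⟩ := card_pos.1 (by omega : 0 < #H.edgeFinset)
    induction e with | _ x y
    have hxy : H.Adj x y := by simpa using he
    have := ih _ (erase_ssubset hv) hG ⟨x, mem_erase.2 ⟨?_, (hmem hxy).1⟩⟩ ?_
    · rw [card_erase_of_mem hv] at this
      omega
    · rintro rfl
      exact hv' ⟨y, hxy⟩
    · exact fun u hu => mem_coe.2 (mem_erase.2 ⟨fun h => hv' (h ▸ hu), hsupp hu⟩)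
  have hthree : ∀ x y, H.Adj x y → 3 ≤ #(H.neighborFinset x ∩ H.neighborFinset y) := by
    intro x y hxy
    have hsupp' : (H.map (update id y x)).support ⊆ s.erase y := by
      rintro _ ⟨_, -, u, v, huv, rfl, rfl⟩
      rcases eq_or_ne u y with rfl | hu
      · simpa using ⟨(hmem hxy).1, hxy.ne⟩
      · simpa [hu] using (hmem huv).1
    have hle : #(H.map (update id y x)).edgeFinset + 2 ≤ 3 * #(s.erase y) := by
      convert ih _ (erase_ssubset (hmem hxy).2) (hG.contract hxy)
        ⟨x, mem_erase.2 ⟨hxy.ne, (hmem hxy).1⟩⟩ hsupp'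
    rw [card_erase_of_mem (hmem hxy).2] at hle
    have := card_edgeFinset_le_contract (G := H) x y
    omega
  obtain ⟨v, hv, hlt⟩ := exists_degree_lt (d := 6) hsupp (by omega)
  obtain ⟨x, y, hxy, h⟩ := hG.exists_card_inter_neighborFinset_lt_three (hpos v hv) hlt
  exact h.not_ge (hthree x y hxy)

theorem WeaklyPlanar.card_edgeSet_le (hG : WeaklyPlanar G) :
    Nat.card G.edgeSet ≤ 3 * Fintype.card V := by
  classical
  rcases isEmpty_or_nonempty V with h | h
  · simp
  · have := hG.card_edgeFinset_add_two_le univ_nonempty (by simp)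
    rw [Nat.card_eq_fintype_card, ← SimpleGraph.edgeFinset_card]
    rw [card_univ] at this
    omega

end WeaklyPlanar

section Arcs

open Set

variable {X : Type*} [TopologicalSpace X] {S S' F : Set X} {x y z : X}

/-- `S` is an arc from `x` to `y`: the image of an injective path. -/
def IsArc (S : Set X) (x y : X) : Prop :=
  ∃ γ : Path x y, Function.Injective γ ∧ range γ = S

theorem isArc_image_Icc {f : ℝ → X} {a b : ℝ} (hab : a < b) (hf : ContinuousOn f (Icc a b))
    (hinj : InjOn f (Icc a b)) : IsArc (f '' Icc a b) (f a) (f b) := by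
  let φ : unitInterval ≃ₜ Icc a b := (iccHomeoI a b hab).symm
  have hval (t : unitInterval) : (φ t : ℝ) = (b - a) * t + a := rfl
  refine ⟨⟨⟨fun t => f (φ t), hf.comp_continuous (by fun_prop) fun t => (φ t).2⟩,
    by simp [hval], by simp [hval]⟩, fun t u htu => ?_, ?_⟩
  · exact φ.injective (Subtype.ext (hinj (φ t).2 (φ u).2 htu))
  · exact (φ.surjective.range_comp fun t => f t).trans (by rw [image_eq_range])

theorem IsArc.symm : IsArc S x y → IsArc S y x := fun ⟨γ, hγ, hS⟩ =>
  ⟨γ.symm, hγ.comp unitInterval.symm_bijective.injective, by rw [Path.symm_range, hS]⟩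

theorem IsArc.joinedIn : IsArc S x y → JoinedIn S x y := fun ⟨γ, _, hS⟩ =>
  ⟨γ, fun t => hS ▸ mem_range_self t⟩

theorem IsArc.isConnected : IsArc S x y → IsConnected S := fun ⟨γ, _, hS⟩ =>
  hS ▸ isConnected_range γ.continuous

theorem IsArc.left_mem : IsArc S x y → x ∈ S := fun ⟨γ, _, hS⟩ => hS ▸ ⟨0, γ.source⟩

theorem IsArc.ne : IsArc S x y → x ≠ y := fun ⟨γ, hγ, _⟩ h =>
  zero_ne_one (hγ ((γ.source.trans h).trans γ.target.symm))

theorem IsArc.exists_eq_image (hS : IsArc S x y) : ∃ f : ℝ → X,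
    Continuous f ∧ InjOn f (Icc 0 1) ∧ f 0 = x ∧ f 1 = y ∧ f '' Icc 0 1 = S := by
  obtain ⟨γ, hγ, rfl⟩ := hS
  refine ⟨γ.extend, γ.continuous_extend, fun t ht u hu htu => ?_, γ.extend_zero, γ.extend_one,
    ?_⟩
  · rw [γ.extend_apply ht, γ.extend_apply hu] at htu
    exact congrArg Subtype.val (hγ htu)
  · ext z
    exact ⟨fun ⟨t, ht, hz⟩ => ⟨⟨t, ht⟩, by rw [← hz, γ.extend_apply ht]⟩,
      fun ⟨t, hz⟩ => ⟨t, t.2, by rw [γ.extend_apply t.2, ← hz]⟩⟩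

theorem IsArc.trans (hS : IsArc S x y) (hS' : IsArc S' y z) (hSS' : S ∩ S' ⊆ {y}) :
    IsArc (S ∪ S') x z := by
  obtain ⟨γ, hγ, rfl⟩ := hS
  obtain ⟨γ', hγ', rfl⟩ := hS'
  have hmeet {t u} (h : γ t = γ' u) : (t : ℝ) = 1 ∧ (u : ℝ) = 0 := by
    have hy : γ t = y := hSS' ⟨⟨t, rfl⟩, ⟨u, h.symm⟩⟩
    exact ⟨congrArg Subtype.val (hγ (hy.trans γ.target.symm)),
      congrArg Subtype.val (hγ' ((h.symm.trans hy).trans γ'.source.symm))⟩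
  refine ⟨γ.trans γ', fun t u htu => Subtype.ext ?_, Path.trans_range γ γ'⟩
  rw [Path.trans_apply, Path.trans_apply] at htu
  split_ifs at htu with ht hu hu
  · linarith [congrArg Subtype.val (hγ htu)]
  · linarith [(hmeet htu).1, (hmeet htu).2]
  · linarith [(hmeet htu.symm).1, (hmeet htu.symm).2]
  · linarith [congrArg Subtype.val (hγ' htu)]

theorem IsArc.exists_split (hS : IsArc S x y) (hz : z ∈ S) (hxz : x ≠ z) (hyz : y ≠ z) :
    ∃ S₁ S₂, IsArc S₁ x z ∧ IsArc S₂ y z ∧ S₁ ⊆ S ∧ S₂ ⊆ S ∧ S₁ ∩ S₂ ⊆ {z} := by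
  obtain ⟨f, hf, hinj, rfl, rfl, rfl⟩ := hS.exists_eq_image
  obtain ⟨t, ht, rfl⟩ := hz
  have h0t : 0 < t := ht.1.lt_of_ne fun h => hxz (by rw [h])
  have ht1 : t < 1 := ht.2.lt_of_ne fun h => hyz (by rw [h])
  have h₁ : Icc 0 t ⊆ Icc 0 1 := Icc_subset_Icc_right ht.2
  have h₂ : Icc t 1 ⊆ Icc 0 1 := Icc_subset_Icc_left ht.1
  refine ⟨f '' Icc 0 t, f '' Icc t 1, isArc_image_Icc h0t hf.continuousOn (hinj.mono h₁),
    (isArc_image_Icc ht1 hf.continuousOn (hinj.mono h₂)).symm, image_mono h₁, image_mono h₂, ?_⟩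
  rw [← hinj.image_inter h₁ h₂, Icc_inter_Icc_eq_singleton ht.1 ht.2, image_singleton]

theorem IsArc.exists_isArc_inter_subset_singleton (hS : IsArc S x y) (hF : IsClosed F)
    (hx : x ∉ F) (hy : y ∈ F) : ∃ O ⊆ S, ∃ p ∈ F, IsArc O x p ∧ O ∩ F ⊆ {p} := by
  obtain ⟨f, hf, hinj, rfl, rfl, rfl⟩ := hS.exists_eq_image
  obtain ⟨t, ⟨ht, htF⟩, hleast⟩ := (isCompact_Icc.inter_right (hF.preimage hf)).exists_isLeast
    ⟨1, right_mem_Icc.2 zero_le_one, hy⟩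
  have h0t : 0 < t := ht.1.lt_of_ne fun h => hx (by rwa [h])
  have hsub : Icc 0 t ⊆ Icc 0 1 := Icc_subset_Icc_right ht.2
  refine ⟨f '' Icc 0 t, image_mono hsub, f t, htF,
    isArc_image_Icc h0t hf.continuousOn (hinj.mono hsub), ?_⟩
  rintro _ ⟨⟨u, hu, rfl⟩, huF⟩
  exact congrArg f (hu.2.antisymm (hleast ⟨hsub hu, huF⟩))

end Arcs

section RadialArcs

open Set Metric

variable {E : Type*} [NormedAddCommGroup E] [NormedSpace ℝ E] {h : E ≃ₜ E} {S S' : Set E}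
  {p x y : E}

/-- A homeomorphism `h` of the space onto itself describes a disc, the set of points `y` with
`‖h y‖ ≤ 1`. The set `S` is radial in this disc if, with each point of the open disc other than
the centre, `S` contains the point where the radius through it meets the boundary. -/
def IsRadial (h : E ≃ₜ E) (S : Set E) : Prop :=
  ∀ y ∈ S, ‖h y‖ < 1 → h y ≠ 0 → h.symm (‖h y‖⁻¹ • h y) ∈ S

theorem IsRadial.exists_mem_inter (hS : IsRadial h S) (hS' : IsRadial h S') (hyS : y ∈ S)
    (hyS' : y ∈ S') (hy : ‖h y‖ < 1) (hy0 : h y ≠ 0) : ∃ z ∈ S ∩ S', ‖h z‖ = 1 :=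
  ⟨_, ⟨hS y hyS hy hy0, hS' y hyS' hy hy0⟩, by simp [norm_smul, hy0]⟩

/-- The radius of the disc described by `h` from its centre to the boundary point `p`. -/
def radius (h : E ≃ₜ E) (p : E) : Set E :=
  (fun u : ℝ => h.symm (u • h p)) '' Icc 0 1

theorem isArc_radius (hp : h p ≠ 0) : IsArc (radius h p) (h.symm 0) p := by
  simpa [radius] using isArc_image_Icc (f := fun u : ℝ => h.symm (u • h p)) zero_lt_one
    (by fun_prop) (h.symm.injective.comp (smul_left_injective ℝ hp)).injOn

theorem norm_apply_le_one_of_mem_radius (hp : ‖h p‖ = 1) (hy : y ∈ radius h p) : ‖h y‖ ≤ 1 := by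
  obtain ⟨u, hu, rfl⟩ := hy
  simpa [norm_smul, hp, abs_of_nonneg hu.1] using hu.2

theorem eq_of_mem_radius (hp : ‖h p‖ = 1) (hy : y ∈ radius h p) (hy0 : h y ≠ 0) :
    h.symm (‖h y‖⁻¹ • h y) = p := by
  obtain ⟨u, hu, rfl⟩ := hy
  have hu0 : u ≠ 0 := fun h0 => hy0 (by simp [h0])
  simp [norm_smul, hp, abs_of_nonneg hu.1, smul_smul, hu0]

theorem IsArc.exists_isRadial (hS : IsArc S x y) (hx : 1 < ‖h x‖) (hy : ‖h y‖ < 1) :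
    ∃ S', IsArc S' x (h.symm 0) ∧ IsRadial h S' ∧ ∀ z ∈ S', 1 ≤ ‖h z‖ → z ∈ S := by
  have hcont : Continuous fun z => ‖h z‖ := by fun_prop
  obtain ⟨O, hOS, p, hpF, hO, hOF⟩ := hS.exists_isArc_inter_subset_singleton
    (isClosed_le hcont continuous_const) (not_le.2 hx) hy.le
  have hp : ‖h p‖ = 1 := by
    obtain ⟨q, hqO, hq⟩ := hO.isConnected.isPreconnected.intermediate_value hO.symm.left_mem
      hO.left_mem hcont.continuousOn ⟨hpF, hx.le⟩
    rwa [hOF ⟨hqO, hq.le⟩] at hq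
  have hp0 : h p ≠ 0 := norm_ne_zero_iff.1 (hp ▸ one_ne_zero)
  have hpO : p ∈ O := hO.symm.left_mem
  have hR {z} (hz : z ∈ radius h p) := norm_apply_le_one_of_mem_radius hp hz
  have hproj {z} (hz : z ∈ radius h p) (hz0 : h z ≠ 0) := eq_of_mem_radius hp hz hz0
  refine ⟨O ∪ radius h p, hO.trans (isArc_radius hp0).symm fun z hz => hOF ⟨hz.1, hR hz.2⟩,
    ?_, ?_⟩
  · rintro z (hz | hz) hz1 hz0
    · exact absurd hz1 (by rw [hOF ⟨hz, hz1.le⟩, hp]; exact lt_irrefl 1)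
    · exact .inl (by rwa [hproj hz hz0])
  · rintro z (hz | hz) hz1
    · exact hOS hz
    · have hz1 : ‖h z‖ = 1 := (hR hz).antisymm hz1
      have := hproj hz (norm_ne_zero_iff.1 (hz1 ▸ one_ne_zero))
      rw [hz1, inv_one, one_smul, h.symm_apply_apply] at this
      exact hOS (this ▸ hpO)

theorem IsArc.exists_isRadial_pair (hS : IsArc S x y) (hx : 1 < ‖h x‖) (hy : 1 < ‖h y‖)
    (hp : p ∈ S) (hp1 : ‖h p‖ < 1) :
    ∃ S₁ S₂, IsArc S₁ x (h.symm 0) ∧ IsArc S₂ y (h.symm 0) ∧ IsRadial h S₁ ∧ IsRadial h S₂ ∧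
      (∀ z ∈ S₁ ∪ S₂, 1 ≤ ‖h z‖ → z ∈ S) ∧ ∀ z ∈ S₁ ∩ S₂, ‖h z‖ < 1 := by
  obtain ⟨O₁, O₂, hO₁, hO₂, hOS₁, hOS₂, hOO⟩ := hS.exists_split hp
    (by rintro rfl; exact hx.not_gt hp1) (by rintro rfl; exact hy.not_gt hp1)
  obtain ⟨S₁, hS₁, hrad₁, hout₁⟩ := hO₁.exists_isRadial hx hp1
  obtain ⟨S₂, hS₂, hrad₂, hout₂⟩ := hO₂.exists_isRadial hy hp1
  refine ⟨S₁, S₂, hS₁, hS₂, hrad₁, hrad₂, ?_, fun z hz => ?_⟩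
  · exact fun z hz hz1 => hz.elim (fun hz => hOS₁ (hout₁ z hz hz1)) fun hz => hOS₂ (hout₂ z hz hz1)
  · by_contra! hz1
    rw [hOO ⟨hout₁ z hz.1 hz1, hout₂ z hz.2 hz1⟩] at hz1
    exact hz1.not_gt hp1

end RadialArcs

section ThinSets

open Set Metric Topology

variable {E : Type*} [NormedAddCommGroup E] [NormedSpace ℝ E]

/-- A set is thin if it is covered by finitely many affinely parametrised lines (or points). -/
def IsThin (K : Set E) : Prop :=
  ∃ F : Set (ℝ →ᵃ[ℝ] E), F.Finite ∧ ∀ x ∈ K, ∃ l ∈ F, x ∈ range l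

theorem IsThin.biUnion {ι : Type*} {s : Set ι} (hs : s.Finite) {K : ι → Set E}
    (hK : ∀ i ∈ s, IsThin (K i)) : IsThin (⋃ i ∈ s, K i) := by
  choose! F hF hKF using hK
  refine ⟨⋃ i ∈ s, F i, hs.biUnion hF, fun x hx => ?_⟩
  obtain ⟨i, hi, hx⟩ := mem_iUnion₂.1 hx
  obtain ⟨l, hl, hxl⟩ := hKF i hi x hx
  exact ⟨l, mem_biUnion hi hl, hxl⟩

/-- A map is piecewise an affine automorphism if, at each point, it agrees with one of finitely
many affine automorphisms of the space. The pieces are not required to be polyhedra. -/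
def IsPiecewiseAffine (f : E → E) : Prop :=
  ∃ B : Set (E ≃ᵃ[ℝ] E), B.Finite ∧ ∀ x, ∃ e ∈ B, f x = e x

theorem IsPiecewiseAffine.of_affineEquiv (e : E ≃ᵃ[ℝ] E) : IsPiecewiseAffine e :=
  ⟨{e}, finite_singleton _, fun _ => ⟨_, rfl, rfl⟩⟩

theorem IsPiecewiseAffine.comp {f g : E → E} (hg : IsPiecewiseAffine g)
    (hf : IsPiecewiseAffine f) : IsPiecewiseAffine (g ∘ f) := by
  obtain ⟨B, hB, hBf⟩ := hf
  obtain ⟨C, hC, hCg⟩ := hg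
  refine ⟨image2 AffineEquiv.trans B C, hB.image2 _ hC, fun x => ?_⟩
  obtain ⟨e, he, hx⟩ := hBf x
  obtain ⟨e', he', hx'⟩ := hCg (f x)
  exact ⟨_, mem_image2_of_mem he he', by simpa [hx] using hx'⟩

theorem IsPiecewiseAffine.symm {f : E ≃ₜ E} (hf : IsPiecewiseAffine f) :
    IsPiecewiseAffine f.symm := by
  obtain ⟨B, hB, hBf⟩ := hf
  refine ⟨AffineEquiv.symm '' B, hB.image _, fun x => ?_⟩
  obtain ⟨e, he, hx⟩ := hBf (f.symm x)
  exact ⟨_, mem_image_of_mem _ he, e.injective (by simp [← hx])⟩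

theorem IsThin.image {K : Set E} (hK : IsThin K) {f : E → E} (hf : IsPiecewiseAffine f) :
    IsThin (f '' K) := by
  obtain ⟨F, hF, hKF⟩ := hK
  obtain ⟨B, hB, hBf⟩ := hf
  refine ⟨image2 (fun l e => e.toAffineMap.comp l) F B, hF.image2 _ hB, ?_⟩
  rintro _ ⟨x, hx, rfl⟩
  obtain ⟨l, hl, t, rfl⟩ := hKF x hx
  obtain ⟨e, he, hx⟩ := hBf (l t)
  exact ⟨_, mem_image2_of_mem hl he, t, hx.symm⟩

theorem isPiecewiseAffine_add_smul {g : E → ℝ} {v : E} {B : Set (E →ᵃ[ℝ] ℝ)} (hB : B.Finite)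
    (hg : ∀ x, ∃ p ∈ B, g x = p x) (hv : ∀ p ∈ B, IsUnit (1 + p.linear v)) :
    IsPiecewiseAffine fun x => x + g x • v := by
  have hpiece (p : E →ᵃ[ℝ] ℝ) (hp : p ∈ B) : ∃ e : E ≃ᵃ[ℝ] E, ∀ x, e x = x + p x • v :=
    ⟨(LinearEquiv.dilatransvection (hv p hp)).toAffineEquiv.trans
      (AffineEquiv.constVAdd ℝ E (p 0 • v)), fun x => by
      rw [p.decomp]
      simp only [AffineEquiv.trans_apply, LinearEquiv.coe_toAffineEquiv,
        LinearEquiv.dilatransvection.apply, AffineEquiv.constVAdd_apply, vadd_eq_add, Pi.add_apply,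
        map_zero, add_smul, zero_add]
      abel⟩
  choose! e he using hpiece
  refine ⟨e '' B, hB.image e, fun x => ?_⟩
  obtain ⟨p, hp, hx⟩ := hg x
  exact ⟨e p, mem_image_of_mem e hp, by simp only [he p hp, hx]⟩

theorem exists_homeomorph_add_smul [CompleteSpace E] {g : E → ℝ} (hg : LipschitzWith 1 g) {v : E}
    (hv : ‖v‖ < 1) : ∃ h : E ≃ₜ E, ∀ x, h x = x + g x • v := by
  have happrox : ApproximatesLinearOn (fun x => x + g x • v)
      (ContinuousLinearEquiv.refl ℝ E : E →L[ℝ] E) univ ‖v‖₊ := by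
    intro x _ y _
    have hsub : x + g x • v - (y + g y • v) - (x - y) = (g x - g y) • v := by
      rw [sub_smul]; abel
    simpa [hsub, norm_smul, mul_comm, dist_eq_norm] using
      mul_le_mul_of_nonneg_right (hg.dist_le_mul x y) (norm_nonneg v)
  refine ⟨happrox.toHomeomorph _ ?_, fun x => rfl⟩
  rcases subsingleton_or_nontrivial E with h | h
  · exact .inl h
  · refine .inr (NNReal.coe_lt_coe.1 ?_)
    simpa using hv

end ThinSets

section MovingPoints

open Set Metric Topology

section EuclideanSpace

variable {ι : Type*} [Fintype ι]

/-- The bump function of height `r` around `c` built on the supremum norm; unlike the Euclidean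
norm, this norm is piecewise affine. -/
def supBump (c : EuclideanSpace ℝ ι) (r : ℝ) (x : EuclideanSpace ℝ ι) : ℝ :=
  max 0 (r - ‖WithLp.ofLp (x - c)‖)

theorem lipschitzWith_supBump (c : EuclideanSpace ℝ ι) (r : ℝ) :
    LipschitzWith 1 (supBump c r) := by
  refine (LipschitzWith.of_le_add fun x y => ?_).const_max 0
  have hle : ‖WithLp.ofLp (y - c)‖ ≤ ‖WithLp.ofLp (x - c)‖ + ‖WithLp.ofLp (y - x)‖ := by
    simpa using norm_add_le (WithLp.ofLp (x - c)) (WithLp.ofLp (y - x))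
  have hle' : ‖WithLp.ofLp (y - x)‖ ≤ ‖y - x‖ :=
    (pi_norm_le_iff_of_nonneg (norm_nonneg _)).2 (PiLp.norm_apply_le _)
  rw [dist_comm, dist_eq_norm]
  linarith

variable [Nonempty ι]

theorem isPiecewiseAffine_add_supBump_smul (c : EuclideanSpace ℝ ι) (r : ℝ)
    {v : EuclideanSpace ℝ ι} (hv : ‖v‖ < 1) :
    IsPiecewiseAffine fun x => x + supBump c r x • v := by
  let coord (i : ι) : EuclideanSpace ℝ ι →ᵃ[ℝ] ℝ :=
    (EuclideanSpace.projₗ i).toAffineMap - AffineMap.const ℝ _ (c i)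
  let slope (i : ι) (ε : ℝ) : EuclideanSpace ℝ ι →ᵃ[ℝ] ℝ := AffineMap.const ℝ _ r - ε • coord i
  refine isPiecewiseAffine_add_smul (B := insert 0 (image2 slope univ {1, -1}))
    ((finite_univ.image2 _ (toFinite _)).insert _) (fun x => ?_) ?_
  · obtain ⟨i, hi⟩ := Finite.exists_max fun i => ‖(x - c) i‖
    have hnorm : ‖WithLp.ofLp (x - c)‖ = |x i - c i| :=
      le_antisymm ((pi_norm_le_iff_of_nonempty _).2 hi) (norm_le_pi_norm (WithLp.ofLp (x - c)) i)
    rcases max_choice 0 (r - ‖WithLp.ofLp (x - c)‖) with h | h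
    · exact ⟨0, mem_insert _ _, h⟩
    · have hval : supBump c r x = r - |x i - c i| := hnorm ▸ h
      rcases abs_choice (x i - c i) with h' | h'
      · exact ⟨slope i 1, .inr (mem_image2_of_mem trivial (by simp)), by
          simp [hval, h', slope, coord]⟩
      · exact ⟨slope i (-1), .inr (mem_image2_of_mem trivial (by simp)), by
          simp [hval, h', slope, coord]⟩
  · have hlt (i : ι) : |v i| < 1 := (PiLp.norm_apply_le v i).trans_lt hv
    rintro _ (rfl | ⟨i, -, ε, rfl | rfl, rfl⟩)
    · simp
    · have := (abs_lt.1 (hlt i)).2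
      simpa [slope, coord] using (by linarith : (1 : ℝ) + -v i ≠ 0)
    · have := (abs_lt.1 (hlt i)).1
      simpa [slope, coord] using (by linarith : (1 : ℝ) + v i ≠ 0)

theorem eventually_exists_homeomorph_apply_eq {U : Set (EuclideanSpace ℝ ι)}
    {c : EuclideanSpace ℝ ι} (hU : U ∈ 𝓝 c) :
    ∀ᶠ y in 𝓝 c, ∃ h : EuclideanSpace ℝ ι ≃ₜ EuclideanSpace ℝ ι,
      IsPiecewiseAffine h ∧ h c = y ∧ EqOn h id Uᶜ := by
  obtain ⟨r, hr, hrU⟩ : ∃ r > 0, ∀ x, ‖WithLp.ofLp (x - c)‖ < r → x ∈ U := by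
    obtain ⟨r, hr, h⟩ := Metric.mem_nhds_iff.1
      ((PiLp.continuous_toLp 2 fun _ : ι => ℝ).continuousAt (x := WithLp.ofLp c) hU)
    exact ⟨r, hr, fun x hx => h (mem_ball_iff_norm.2 hx)⟩
  filter_upwards [ball_mem_nhds c hr] with y hy
  have hv : ‖r⁻¹ • (y - c)‖ < 1 := by
    rwa [norm_smul, norm_inv, Real.norm_of_nonneg hr.le, inv_mul_lt_iff₀ hr, mul_one,
      ← dist_eq_norm]
  obtain ⟨h, hh⟩ := exists_homeomorph_add_smul (lipschitzWith_supBump c r) hv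
  refine ⟨h, ?_, ?_, fun x hx => ?_⟩
  · simpa only [funext hh] using isPiecewiseAffine_add_supBump_smul c r hv
  · simp [hh, supBump, hr.le, hr.ne']
  · have hzero : supBump c r x = 0 := max_eq_left (sub_nonpos.2 (not_lt.1 (mt (hrU x) hx)))
    simp [hh, hzero]

theorem exists_homeomorph_apply_eq_of_isPreconnected {U : Set (EuclideanSpace ℝ ι)} (hU : IsOpen U)
    (hc : IsPreconnected U) {x y : EuclideanSpace ℝ ι} (hx : x ∈ U) (hy : y ∈ U) :
    ∃ h : EuclideanSpace ℝ ι ≃ₜ EuclideanSpace ℝ ι,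
      IsPiecewiseAffine h ∧ h x = y ∧ EqOn h id Uᶜ := by
  refine hc.induction₂ (fun x y => ∃ h : EuclideanSpace ℝ ι ≃ₜ EuclideanSpace ℝ ι,
    IsPiecewiseAffine h ∧ h x = y ∧ EqOn h id Uᶜ) (fun x hx => ?_) ?_ ?_ hx hy
  · exact (eventually_exists_homeomorph_apply_eq (hU.mem_nhds hx)).filter_mono nhdsWithin_le_nhds
  · rintro x _ _ - - - ⟨h, hpa, rfl, hid⟩ ⟨h', hpa', rfl, hid'⟩
    exact ⟨h.trans h', hpa'.comp hpa, rfl, fun z hz => by simp [hid hz, hid' hz]⟩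
  · rintro x _ - - ⟨h, hpa, rfl, hid⟩
    exact ⟨h.symm, hpa.symm, by simp, fun z hz => (h.symm_apply_eq).2 (hid hz).symm⟩

end EuclideanSpace

section Countable

variable {E : Type*} [NormedAddCommGroup E] [NormedSpace ℝ E]

theorem isPathConnected_ball_sdiff_countable (hE : 1 < Module.rank ℝ E) {C : Set E}
    (hC : C.Countable) (x : E) {r : ℝ} (hr : 0 < r) : IsPathConnected (ball x r \ C) := by
  let f := OpenPartialHomeomorph.univBall x r
  have hinj : Function.Injective f := fun y z => f.injOn (by simp [f]) (by simp [f])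
  have hrange : range f = ball x r := by
    rw [← image_univ, ← OpenPartialHomeomorph.univBall_source x r, f.image_source_eq_target,
      OpenPartialHomeomorph.univBall_target x hr]
  rw [← hrange, sdiff_eq, inter_comm, ← image_preimage_eq_inter_range, preimage_compl]
  exact ((hC.preimage hinj).isPathConnected_compl_of_one_lt_rank hE).image
    (OpenPartialHomeomorph.continuous_univBall x r)

theorem isPathConnected_sdiff_countable (hE : 1 < Module.rank ℝ E) {U C : Set E}
    (hU : IsOpen U) (hc : IsConnected U) (hC : C.Countable) : IsPathConnected (U \ C) := by
  have : Nontrivial E := (rank_pos_iff_nontrivial (R := ℝ)).1 (zero_lt_one.trans hE)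
  have hnear (x : E) (hx : x ∈ U) : ∃ V ∈ 𝓝 x, IsPathConnected (V \ C) ∧ V ⊆ U := by
    obtain ⟨r, hr, hrU⟩ := Metric.isOpen_iff.1 hU x hx
    exact ⟨_, ball_mem_nhds x hr, isPathConnected_ball_sdiff_countable hE hC x hr, hrU⟩
  let P (x y : E) : Prop :=
    ∃ V ∈ 𝓝 x, ∃ V' ∈ 𝓝 y, ∀ p ∈ V \ C, ∀ q ∈ V' \ C, JoinedIn (U \ C) p q
  have hP {x y : E} (hx : x ∈ U) (hy : y ∈ U) : P x y := by
    refine hc.isPreconnected.induction₂ P (fun x hx => ?_) ?_ ?_ hx hy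
    · obtain ⟨V, hV, hVC, hVU⟩ := hnear x hx
      filter_upwards [nhdsWithin_le_nhds (eventually_mem_nhds_iff.2 hV)] with y hy
      exact ⟨V, hV, V, hy, fun p hp q hq =>
        (hVC.joinedIn p hp q hq).mono (sdiff_subset_sdiff_left hVU)⟩
    · rintro x y z - - - ⟨V₁, hV₁, V₂, hV₂, h⟩ ⟨V₃, hV₃, V₄, hV₄, h'⟩
      obtain ⟨q, hq⟩ := (hC.dense_compl ℝ).inter_nhds_nonempty (Filter.inter_mem hV₂ hV₃)
      exact ⟨V₁, hV₁, V₄, hV₄, fun p hp p' hp' =>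
        (h p hp q ⟨hq.2.1, hq.1⟩).trans (h' q ⟨hq.2.2, hq.1⟩ p' hp')⟩
    · rintro x y - - ⟨V, hV, V', hV', h⟩
      exact ⟨V', hV', V, hV, fun p hp q hq => (h q hq p hp).symm⟩
  obtain ⟨x, hx⟩ := hc.nonempty
  obtain ⟨_, -, hVC, hVU⟩ := hnear x hx
  refine isPathConnected_iff.2 ⟨hVC.nonempty.mono (sdiff_subset_sdiff_left hVU), ?_⟩
  rintro p ⟨hpU, hpC⟩ q ⟨hqU, hqC⟩
  obtain ⟨V, hV, V', hV', h⟩ := hP hpU hqU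
  exact h p ⟨mem_of_mem_nhds hV, hpC⟩ q ⟨mem_of_mem_nhds hV', hqC⟩

end Countable

theorem one_lt_rank_euclideanSpace (ι : Type*) [Finite ι] [Nontrivial ι] :
    1 < Module.rank ℝ (EuclideanSpace ℝ ι) := by
  have := Fintype.ofFinite ι
  simpa [rank_eq_card_basis (EuclideanSpace.basisFun ι ℝ).toBasis] using Fintype.one_lt_card

theorem exists_homeomorph_forall_apply_eq {ι κ : Type*} [Fintype ι] [Nontrivial ι]
    {U : Set (EuclideanSpace ℝ ι)} (hU : IsOpen U) (hc : IsConnected U) (s : Finset κ)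
    {p q : κ → EuclideanSpace ℝ ι} (hp : MapsTo p s U) (hq : MapsTo q s U) (hpi : InjOn p s)
    (hqi : InjOn q s) : ∃ h : EuclideanSpace ℝ ι ≃ₜ EuclideanSpace ℝ ι,
      IsPiecewiseAffine h ∧ (∀ i ∈ s, h (p i) = q i) ∧ EqOn h id Uᶜ := by
  classical
  induction s using Finset.induction_on with
  | empty => exact ⟨Homeomorph.refl _, .of_affineEquiv (.refl ℝ _), by simp, fun x _ => rfl⟩
  | insert a s ha ih =>
    rw [Finset.coe_insert] at hp hq hpi hqi
    obtain ⟨hpi, hpa⟩ := (injOn_insert (mod_cast ha)).1 hpi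
    obtain ⟨hqi, hqa⟩ := (injOn_insert (mod_cast ha)).1 hqi
    obtain ⟨h, hpl, hpq, hid⟩ := ih (hp.mono_left (subset_insert _ _))
      (hq.mono_left (subset_insert _ _)) hpi hqi
    have hhU : MapsTo h U U := fun x hx => by
      by_contra hhx
      exact hhx (by rwa [h.injective (hid hhx)])
    have hha : h (p a) ∉ q '' s := by
      rintro ⟨i, hi, hia⟩
      exact hpa ⟨i, hi, h.injective ((hpq i hi).trans hia)⟩
    have hfin : (q '' s).Finite := s.finite_toSet.image q
    obtain ⟨g, hgpl, hga, hgid⟩ := exists_homeomorph_apply_eq_of_isPreconnected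
      (hU.sdiff hfin.isClosed)
      (isPathConnected_sdiff_countable (one_lt_rank_euclideanSpace ι) hU hc
        hfin.countable).isConnected.isPreconnected
      ⟨hhU (hp (mem_insert _ _)), hha⟩ ⟨hq (mem_insert _ _), hqa⟩
    refine ⟨h.trans g, hgpl.comp hpl, fun i hi => ?_, fun x hx => ?_⟩
    · rcases Finset.mem_insert.1 hi with rfl | hi
      · exact hga
      · exact (congrArg g (hpq i hi)).trans (hgid fun hx => hx.2 ⟨i, hi, rfl⟩)
    · exact (congrArg g (hid hx)).trans (hgid fun h => hx h.1)

theorem exists_homeomorph_forall_apply_eq_and_symm_mem {ι κ : Type*} [Fintype ι] [Nontrivial ι]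
    {U : Set (EuclideanSpace ℝ ι)} (hU : IsOpen U) (hc : IsConnected U) (s : Finset κ)
    {p q : κ → EuclideanSpace ℝ ι} (hp : MapsTo p s U) (hpi : InjOn p s) (hqi : InjOn q s) {R : ℝ}
    (hq : ∀ i ∈ s, ‖q i‖ ≤ R) : ∃ h : EuclideanSpace ℝ ι ≃ₜ EuclideanSpace ℝ ι,
      IsPiecewiseAffine h ∧ (∀ i ∈ s, h (p i) = q i) ∧ ∀ y, ‖y‖ ≤ R → h.symm y ∈ U := by
  obtain ⟨z, hz⟩ := hc.nonempty
  obtain ⟨ε, hε, hεU⟩ := Metric.isOpen_iff.1 hU z hz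
  obtain ⟨δ, hδ, hδR⟩ := exists_pos_mul_lt hε R
  let A : EuclideanSpace ℝ ι ≃ₜ EuclideanSpace ℝ ι :=
    (Homeomorph.smulOfNeZero δ hδ.ne').trans (Homeomorph.addLeft z)
  have hA : IsPiecewiseAffine A :=
    .of_affineEquiv <| (LinearEquiv.smulOfNeZero ℝ _ δ hδ.ne').toAffineEquiv.trans
      (AffineEquiv.constVAdd ℝ _ z)
  have hAU {y} (hy : ‖y‖ ≤ R) : A y ∈ U := by
    refine hεU (mem_ball_iff_norm.2 ?_)
    calc ‖z + δ • y - z‖ = δ * ‖y‖ := by rw [add_sub_cancel_left, norm_smul_of_nonneg hδ.le]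
      _ ≤ δ * R := by gcongr
      _ < ε := by rwa [mul_comm]
  obtain ⟨h, hpl, hpq, hid⟩ := exists_homeomorph_forall_apply_eq hU hc s hp
    (fun i hi => hAU (hq i hi)) hpi (A.injective.comp_injOn hqi)
  refine ⟨h.trans A.symm, hA.symm.comp hpl, fun i hi => ?_, fun y hy => ?_⟩
  · exact A.symm_apply_eq.2 (hpq i hi)
  · by_contra hx
    refine hx ?_
    have hfix : A y = h.symm (A y) := by simpa using hid hx
    exact hfix ▸ hAU hy

theorem exists_homeomorph_norm_lt_one {ι : Type*} [Fintype ι] [Nontrivial ι]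
    {U : Set (EuclideanSpace ℝ ι)} (hU : IsOpen U) (hc : IsConnected U) {v : EuclideanSpace ℝ ι}
    (hv : v ∈ U) {X : Set (EuclideanSpace ℝ ι)} (hX : X.Finite) (hXU : X ⊆ U) :
    ∃ h : EuclideanSpace ℝ ι ≃ₜ EuclideanSpace ℝ ι,
      h v = 0 ∧ (∀ x ∈ X, ‖h x‖ < 1) ∧ ∀ x, ‖h x‖ ≤ 1 → x ∈ U := by
  have hfin : (insert v X).Finite := hX.insert v
  obtain ⟨C, hC⟩ := (hfin.image fun x => ‖x - v‖).bddAbove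
  obtain ⟨η, hη, hηC⟩ := exists_pos_mul_lt one_pos C
  have hnorm (x) (hx : x ∈ insert v X) : ‖η • (x - v)‖ < 1 :=
    calc ‖η • (x - v)‖ = ‖x - v‖ * η := by rw [norm_smul_of_nonneg hη.le, mul_comm]
      _ ≤ C * η := by gcongr; exact hC (mem_image_of_mem _ hx)
      _ < 1 := hηC
  obtain ⟨h, -, hh, hhU⟩ := exists_homeomorph_forall_apply_eq_and_symm_mem hU hc hfin.toFinset
    (p := id) (q := fun x => η • (x - v)) (R := 1)
    (by simpa [MapsTo, hv] using fun x hx => hXU hx) (injOn_id _)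
    ((smul_right_injective _ hη.ne').comp (sub_left_injective (b := v))).injOn
    (fun x hx => (hnorm x (by simpa using hx)).le)
  refine ⟨h, by simpa using hh v (by simp), fun x hx => ?_, fun x hx => ?_⟩
  · rw [show h x = η • (x - v) from hh x (by simp [hx])]
    exact hnorm x (mem_insert_of_mem _ hx)
  · simpa using hhU _ hx

end MovingPoints

section ThinCurves

open Set

theorem subsingleton_range_inter_range {k V P : Type*} [Field k] [AddCommGroup V] [Module k V]
    [AddTorsor V P] {l l' : k →ᵃ[k] P} (h : l'.linear 1 ∉ k ∙ l.linear 1) :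
    (range l ∩ range l').Subsingleton := by
  rintro _ ⟨⟨s, rfl⟩, s', hs⟩ _ ⟨⟨t, rfl⟩, t', ht⟩
  have hsub : (s' - t') • l'.linear 1 = (s - t) • l.linear 1 := by
    simp only [← map_smul, smul_eq_mul, mul_one, ← vsub_eq_sub, AffineMap.linearMap_vsub, hs, ht]
  by_cases hst : s' = t'
  · rw [← hs, ← ht, hst]
  · refine absurd (Submodule.mem_span_singleton.2 ⟨(s' - t')⁻¹ * (s - t), ?_⟩) h
    rw [mul_smul, ← hsub, inv_smul_smul₀ (sub_ne_zero.2 hst)]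

/-- The plane, as the Euclidean space in which drawings live. -/
abbrev Plane := EuclideanSpace ℝ (Fin 2)

/-- The graph of the zigzag function of slopes `±s` that vanishes exactly at the integers. -/
noncomputable def zigzag (s t : ℝ) : Plane :=
  !₂[t, s * ‖(t : UnitAddCircle)‖]

theorem continuous_zigzag (s : ℝ) : Continuous (zigzag s) := by
  unfold zigzag
  fun_prop

theorem zigzag_injective (s : ℝ) : Function.Injective (zigzag s) := fun t t' h => by
  simpa [zigzag] using congrArg (· 0) h

theorem zigzag_natCast (s : ℝ) (j : ℕ) : zigzag s j = !₂[(j : ℝ), 0] := by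
  simp [zigzag, UnitAddCircle.norm_eq]

theorem norm_zigzag_le {s t : ℝ} (hs : s ∈ Icc 0 1) : ‖zigzag s t‖ ≤ |t| + 1 := by
  have hnorm : ‖(t : UnitAddCircle)‖ ≤ 1 :=
    (AddCircle.norm_le_half_period 1 one_ne_zero).trans (by norm_num)
  calc ‖zigzag s t‖ = ‖!₂[t, 0] + !₂[0, s * ‖(t : UnitAddCircle)‖]‖ := by
        congr 1; ext i; fin_cases i <;> simp [zigzag]
    _ ≤ |t| + s * ‖(t : UnitAddCircle)‖ := by
        refine (norm_add_le _ _).trans_eq ?_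
        simp [EuclideanSpace.norm_eq, Real.sqrt_sq_eq_abs, abs_mul, abs_of_nonneg hs.1]
    _ ≤ |t| + 1 := by
        gcongr
        exact mul_le_one₀ hs.2 (norm_nonneg _) hnorm

theorem exists_affineMap_zigzag (s : ℝ) (m : ℕ) : ∃ F : Set (ℝ →ᵃ[ℝ] Plane), F.Finite ∧
    (∀ l ∈ F, l.linear 1 = !₂[1, s] ∨ l.linear 1 = !₂[1, -s]) ∧
    ∀ t ∈ Icc (0 : ℝ) m, ∃ l ∈ F, zigzag s t ∈ range l := by
  let line (a : ℝ) (j : ℤ) : ℝ →ᵃ[ℝ] Plane := AffineMap.lineMap !₂[(j : ℝ), 0] !₂[j + 1, a]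
  have hline (a : ℝ) (j : ℤ) (t : ℝ) : line a j (t - j) = !₂[t, a * (t - j)] := by
    ext i
    fin_cases i <;> simp [line, AffineMap.lineMap_apply, mul_comm]
  have hdir (a : ℝ) (j : ℤ) : (line a j).linear 1 = !₂[1, a] := by
    ext i
    fin_cases i <;> simp [line]
  refine ⟨image2 line {s, -s} (Icc 0 m), (toFinite _).image2 _ (finite_Icc _ _), ?_,
    fun t ht => ?_⟩
  · rintro _ ⟨a, rfl | rfl, j, -, rfl⟩
    exacts [.inl (hdir _ _), .inr (hdir _ _)]
  · have hmono : Monotone (round : ℝ → ℤ) := fun a b hab => by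
      simp only [round_eq]
      gcongr
    have hround : round t ∈ Icc (0 : ℤ) m :=
      ⟨by simpa using hmono ht.1, by simpa using hmono ht.2⟩
    rcases abs_choice (t - round t) with h | h
    · refine ⟨_, mem_image2_of_mem (by simp) hround, t - round t, (hline s _ t).trans ?_⟩
      rw [zigzag, UnitAddCircle.norm_eq, h]
    · refine ⟨_, mem_image2_of_mem (by simp) hround, t - round t, (hline (-s) _ t).trans ?_⟩
      rw [zigzag, UnitAddCircle.norm_eq, h, mul_neg, neg_mul]

theorem isThin_zigzag (s : ℝ) (m : ℕ) : IsThin (zigzag s '' Icc 0 m) := by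
  obtain ⟨F, hF, -, hFs⟩ := exists_affineMap_zigzag s m
  exact ⟨F, hF, forall_mem_image.2 hFs⟩

theorem finite_setOf_vec_mem_span (v : Plane) : {s : ℝ | !₂[1, s] ∈ ℝ ∙ v}.Finite := by
  refine (finite_singleton (v 1 / v 0)).subset fun s hs => ?_
  obtain ⟨a, ha⟩ := Submodule.mem_span_singleton.1 hs
  have h0 : a * v 0 = 1 := by simpa using congrArg (· 0) ha
  have h1 : a * v 1 = s := by simpa using congrArg (· 1) ha
  have hv : v 0 ≠ 0 := right_ne_zero_of_mul_eq_one h0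
  rw [mem_singleton_iff, eq_div_iff hv, ← h1, mul_right_comm, h0, one_mul]

theorem IsThin.exists_finite_zigzag_inter {K : Set Plane} (hK : IsThin K) (m : ℕ) :
    ∃ s ∈ Icc (0 : ℝ) 1, (zigzag s '' Icc 0 m ∩ K).Finite := by
  obtain ⟨F, hF, hFK⟩ := hK
  have hbad : (⋃ l ∈ F, {s : ℝ | !₂[1, s] ∈ ℝ ∙ l.linear 1} ∪
      Neg.neg ⁻¹' {s : ℝ | !₂[1, s] ∈ ℝ ∙ l.linear 1}).Finite :=
    hF.biUnion fun l _ => (finite_setOf_vec_mem_span _).union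
      ((finite_setOf_vec_mem_span _).preimage neg_injective.injOn)
  obtain ⟨s, hs, hsF⟩ := (Icc_infinite zero_lt_one).exists_notMem_finite hbad
  obtain ⟨F', hF', hdir, hFs⟩ := exists_affineMap_zigzag s m
  refine ⟨s, hs, ((hF.prod hF').biUnion (t := fun p => range p.1 ∩ range p.2)
    fun p hp => (subsingleton_range_inter_range ?_).finite).subset ?_⟩
  · rintro hspan
    refine hsF (mem_biUnion hp.1 ?_)
    rcases hdir _ hp.2 with h | h
    · exact .inl (by rwa [h] at hspan)
    · exact .inr (by rwa [h] at hspan)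
  · rintro _ ⟨⟨t, ht, rfl⟩, hx⟩
    obtain ⟨l, hl, hxl⟩ := hFK _ hx
    obtain ⟨l', hl', hxl'⟩ := hFs t ht
    exact mem_biUnion (x := (l, l')) ⟨hl, hl'⟩ ⟨hxl, hxl'⟩

/-- The curve `f`, on the time interval `[0, m]`, is a thin curve in `U` that passes through the
points `c 0, …, c (m - 1)` at the times `0, …, m - 1`. -/
structure IsThinCurveThrough (U : Set Plane) {m : ℕ} (c : Fin m → Plane) (f : ℝ → Plane) :
    Prop where
  continuous : Continuous f
  injective : Function.Injective f
  apply_eq (i : Fin m) : f i = c i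
  mapsTo : MapsTo f (Icc 0 m) U
  isThin : IsThin (f '' Icc 0 m)

theorem exists_isThinCurveThrough {U : Set Plane} (hU : IsOpen U) (hc : IsConnected U) {m : ℕ}
    {c : Fin m → Plane} (hcU : ∀ i, c i ∈ U) (hci : Function.Injective c) {K : Set Plane}
    (hK : IsThin K) : ∃ f, IsThinCurveThrough U c f ∧ (f '' Icc 0 m ∩ K).Finite := by
  obtain ⟨g, hg, hgc, hgU⟩ := exists_homeomorph_forall_apply_eq_and_symm_mem hU hc Finset.univ
    (p := c) (q := fun i => !₂[(i : ℝ), 0]) (R := m + 1) (fun i _ => hcU i) hci.injOn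
    (fun i _ j _ hij => by simpa [Fin.ext_iff] using congrArg (· 0) hij) (fun i _ => by
      rw [← zigzag_natCast 0]
      refine (norm_zigzag_le (left_mem_Icc.2 zero_le_one)).trans ?_
      rw [Nat.abs_cast]
      gcongr
      exact i.2.le)
  obtain ⟨s, hs, hfin⟩ := (hK.image hg).exists_finite_zigzag_inter m
  refine ⟨g.symm ∘ zigzag s, ⟨g.symm.continuous.comp (continuous_zigzag s),
    g.symm.injective.comp (zigzag_injective s), fun i => ?_, fun t ht => hgU _ ?_, ?_⟩, ?_⟩
  · rw [Function.comp_apply, zigzag_natCast, ← hgc i (Finset.mem_univ i), g.symm_apply_apply]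
  · refine (norm_zigzag_le hs).trans ?_
    rw [abs_of_nonneg ht.1]
    gcongr
    exact ht.2
  · rw [image_comp]
    exact (isThin_zigzag s m).image hg.symm
  · refine (hfin.image g.symm).subset ?_
    rw [image_inter g.symm.injective, image_comp, ← image_comp g.symm g]
    simp

end ThinCurves

section Drawings

open Set

/-- A subset of `E` meant as an arc of a drawing, with a label and with names for its ends. -/
structure LabelledArc (V L E : Type*) where
  label : L
  source : V
  target : V
  carrier : Set E

variable {V L E : Type*}

/-- The labelled arc `a` draws an edge between the points of its ends, inside the region of its
label and avoiding the points of all other vertices. -/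
structure LabelledArc.IsAdmissible [TopologicalSpace E] (w : V → E) (Reg : L → Set E)
    (a : LabelledArc V L E) : Prop where
  isArc : IsArc a.carrier (w a.source) (w a.target)
  subset : a.carrier ⊆ Reg a.label
  eq_or_eq (v : V) : w v ∈ a.carrier → v = a.source ∨ v = a.target

/-- The arcs of `D` draw a multigraph whose vertices are the points `w v`, with crossings only
in the set `Z`. -/
structure IsDrawing [TopologicalSpace E] (w : V → E) (Reg : L → Set E) (Z : Set E)
    (D : Set (LabelledArc V L E)) : Prop where
  isAdmissible : ∀ a ∈ D, a.IsAdmissible w Reg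
  inter_subset : D.Pairwise fun a b => a.carrier ∩ b.carrier ⊆ range w ∪ Z

/-- The simple graph of the arcs of `D` that carry the label `l`. -/
def arcGraph (D : Set (LabelledArc V L E)) (l : L) : SimpleGraph V :=
  .fromEdgeSet ((fun a => s(a.source, a.target)) '' {a ∈ D | a.label = l})

theorem arcGraph_mono {D D' : Set (LabelledArc V L E)} (h : D ⊆ D') (l : L) :
    arcGraph D l ≤ arcGraph D' l :=
  SimpleGraph.fromEdgeSet_mono (image_mono fun _ ha => ⟨h ha.1, ha.2⟩)

theorem arcGraph_reachable {D : Set (LabelledArc V L E)} {a : LabelledArc V L E} (ha : a ∈ D) :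
    (arcGraph D a.label).Reachable a.source a.target := by
  by_cases h : a.source = a.target
  · rw [h]
  · exact SimpleGraph.Adj.reachable ⟨⟨a, ⟨ha, rfl⟩, rfl⟩, h⟩

theorem reachable_arcGraph_le {D : Set (LabelledArc V L E)} {l : L} {G : SimpleGraph V}
    (hG : ∀ a ∈ D, a.label = l → G.Reachable a.source a.target) :
    (arcGraph D l).Reachable ≤ G.Reachable := fun u v huv => by
  refine huv.elim fun p => ?_
  induction p with
  | nil => rfl
  | cons h p ih =>
    obtain ⟨⟨a, ⟨ha, hal⟩, hae⟩, -⟩ := h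
    rcases Sym2.eq_iff.1 hae with ⟨rfl, rfl⟩ | ⟨rfl, rfl⟩
    exacts [(hG a ha hal).trans (ih ⟨p⟩), (hG a ha hal).symm.trans (ih ⟨p⟩)]

variable [NormedAddCommGroup E] {w : V → E} {Reg : L → Set E} {v₀ : V}
  {h : E ≃ₜ E} {a : LabelledArc V L E} {D : Set (LabelledArc V L E)} {Z : Set E}

/-- The preimage under `h` of the closed unit ball is a disc around the point of the vertex `v₀`,
without further vertices, that lies in every region it meets. -/
structure IsHubDisc (w : V → E) (Reg : L → Set E) (v₀ : V) (h : E ≃ₜ E) : Prop where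
  apply_hub : h (w v₀) = 0
  eq_hub (v : V) : ‖h (w v)‖ ≤ 1 → v = v₀
  mem_region (l : L) (x y : E) : x ∈ Reg l → ‖h x‖ ≤ 1 → ‖h y‖ ≤ 1 → y ∈ Reg l

theorem IsHubDisc.symm_zero (hh : IsHubDisc w Reg v₀ h) : h.symm 0 = w v₀ :=
  h.symm_apply_eq.2 hh.apply_hub.symm

theorem IsHubDisc.one_lt_norm (hh : IsHubDisc w Reg v₀ h) {v : V} (hv : v ≠ v₀) :
    1 < ‖h (w v)‖ :=
  not_le.1 fun hle => hv (hh.eq_hub v hle)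

theorem IsHubDisc.isAdmissible (hh : IsHubDisc w Reg v₀ h) (ha : a.IsAdmissible w Reg) {p : E}
    (hp : p ∈ a.carrier) (hp1 : ‖h p‖ ≤ 1) {u : V} {S : Set E} (hS : IsArc S (w u) (h.symm 0))
    (hSa : ∀ z ∈ S, 1 ≤ ‖h z‖ → z ∈ a.carrier)
    (hu : ∀ v, v = a.source ∨ v = a.target → w v ∈ S → v ≠ v₀ → v = u) :
    (LabelledArc.mk a.label u v₀ S).IsAdmissible w Reg where
  isArc := hh.symm_zero ▸ hS
  subset z hz := by
    rcases le_total ‖h z‖ 1 with hz1 | hz1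
    · exact hh.mem_region _ p z (ha.subset hp) hp1 hz1
    · exact ha.subset (hSa z hz hz1)
  eq_or_eq v hv := by
    by_cases hv₀ : v = v₀
    · exact .inr hv₀
    · exact .inl (hu v (ha.eq_or_eq v (hSa _ hv (hh.one_lt_norm hv₀).le)) hv hv₀)

variable [NormedSpace ℝ E]

/-- `N` is a rerouting of the arc `a` through the disc described by `h`: it joins the ends of `a`,
follows `a` outside of the disc, and is radial inside. -/
structure IsRerouting (w : V → E) (Reg : L → Set E) (h : E ≃ₜ E) (a : LabelledArc V L E)
    (N : Set (LabelledArc V L E)) : Prop where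
  isAdmissible : ∀ c ∈ N, c.IsAdmissible w Reg
  isRadial : ∀ c ∈ N, IsRadial h c.carrier
  mem_carrier : ∀ c ∈ N, ∀ z ∈ c.carrier, 1 ≤ ‖h z‖ → z ∈ a.carrier
  norm_lt_one : N.Pairwise fun c d => ∀ z ∈ c.carrier ∩ d.carrier, ‖h z‖ < 1
  reachable : (arcGraph N a.label).Reachable a.source a.target

theorem IsHubDisc.exists_isRerouting_of_hub (hh : IsHubDisc w Reg v₀ h)
    (ha : a.IsAdmissible w Reg) {u : V} (hu : s(a.source, a.target) = s(u, v₀)) :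
    ∃ N, IsRerouting w Reg h a N := by
  have harc : IsArc a.carrier (w u) (w v₀) := by
    rcases Sym2.eq_iff.1 hu with ⟨h₁, h₂⟩ | ⟨h₁, h₂⟩
    · exact h₁ ▸ h₂ ▸ ha.isArc
    · exact h₁ ▸ h₂ ▸ ha.isArc.symm
  have hv₀ : ‖h (w v₀)‖ < 1 := by simp [hh.apply_hub]
  have hne : u ≠ v₀ := fun h => harc.ne (congrArg w h)
  obtain ⟨S, hS, hrad, hSa⟩ := harc.exists_isRadial (hh.one_lt_norm hne) hv₀
  let c : LabelledArc V L E := ⟨a.label, u, v₀, S⟩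
  have hc : c.IsAdmissible w Reg := hh.isAdmissible ha harc.symm.left_mem hv₀.le hS hSa
    fun v hv _ hvv₀ => by
      have : v ∈ s(u, v₀) := hu ▸ Sym2.mem_iff.2 hv
      exact (Sym2.mem_iff.1 this).resolve_right hvv₀
  refine ⟨{c}, by simpa using hc, by simpa using hrad, by simpa using hSa,
    pairwise_singleton _ _, ?_⟩
  have hreach : (arcGraph {c} a.label).Reachable u v₀ :=
    arcGraph_reachable (a := c) rfl
  rcases Sym2.eq_iff.1 hu with ⟨h₁, h₂⟩ | ⟨h₁, h₂⟩
  · rwa [h₁, h₂]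
  · rw [h₁, h₂]
    exact hreach.symm

theorem IsHubDisc.exists_isRerouting_of_ne (hh : IsHubDisc w Reg v₀ h)
    (ha : a.IsAdmissible w Reg) (hs : a.source ≠ v₀) (ht : a.target ≠ v₀) {p : E}
    (hp : p ∈ a.carrier) (hp1 : ‖h p‖ < 1) : ∃ N, IsRerouting w Reg h a N := by
  obtain ⟨S, T, hS, hT, hradS, hradT, hSTa, hST⟩ :=
    ha.isArc.exists_isRadial_pair (hh.one_lt_norm hs) (hh.one_lt_norm ht) hp hp1
  have hsT : w a.source ∉ T := fun h => (hh.one_lt_norm hs).not_gt (hST _ ⟨hS.left_mem, h⟩)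
  have htS : w a.target ∉ S := fun h => (hh.one_lt_norm ht).not_gt (hST _ ⟨h, hT.left_mem⟩)
  let c : LabelledArc V L E := ⟨a.label, a.source, v₀, S⟩
  let d : LabelledArc V L E := ⟨a.label, a.target, v₀, T⟩
  have hSa z (hz : z ∈ S) := hSTa z (.inl hz)
  have hTa z (hz : z ∈ T) := hSTa z (.inr hz)
  have hc : c.IsAdmissible w Reg := hh.isAdmissible ha hp hp1.le hS hSa
    fun v hv hvS _ => hv.resolve_right fun h => htS (h ▸ hvS)
  have hd : d.IsAdmissible w Reg := hh.isAdmissible ha hp hp1.le hT hTa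
    fun v hv hvT _ => hv.resolve_left fun h => hsT (h ▸ hvT)
  refine ⟨{c, d}, by simpa using ⟨hc, hd⟩, by simpa using ⟨hradS, hradT⟩,
    by simpa using ⟨hSa, hTa⟩, ?_, ?_⟩
  · exact pairwise_pair.2 fun _ => ⟨hST, fun z hz => hST z hz.symm⟩
  · exact (arcGraph_reachable (a := c) (.inl rfl)).trans
      (arcGraph_reachable (a := d) (.inr rfl)).symm

theorem IsHubDisc.exists_isRerouting (hh : IsHubDisc w Reg v₀ h) (ha : a.IsAdmissible w Reg) :
    ∃ N, IsRerouting w Reg h a N := by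
  by_cases hout : ∀ z ∈ a.carrier, 1 ≤ ‖h z‖
  · refine ⟨{a}, by simpa using ha, ?_, by simp +contextual, pairwise_singleton _ _,
      arcGraph_reachable rfl⟩
    rintro _ rfl y hy hy1
    exact absurd hy1 (hout y hy).not_gt
  push Not at hout
  obtain ⟨p, hp, hp1⟩ := hout
  by_cases ht : a.target = v₀
  · exact hh.exists_isRerouting_of_hub ha (by rw [ht])
  by_cases hs : a.source = v₀
  · exact hh.exists_isRerouting_of_hub ha (by rw [hs, Sym2.eq_swap])
  · exact hh.exists_isRerouting_of_ne ha hs ht hp hp1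

theorem IsDrawing.exists_reroute (hh : IsHubDisc w Reg v₀ h) (hZ : ∀ x ∈ Z, 1 < ‖h x‖)
    (hD : IsDrawing w Reg ({x | ‖h x‖ < 1} ∪ Z) D) :
    ∃ D', IsDrawing w Reg Z D' ∧ ∀ l, (arcGraph D l).Reachable ≤ (arcGraph D' l).Reachable := by
  choose! N hN using fun a ha => hh.exists_isRerouting (hD.isAdmissible a ha)
  refine ⟨⋃ a ∈ D, N a, ⟨fun c hc => ?_, ?_⟩, fun l => ?_⟩
  · obtain ⟨a, ha, hca⟩ := mem_iUnion₂.1 hc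
    exact (hN a ha).isAdmissible c hca
  · intro c hc d hd hcd
    obtain ⟨a, ha, hca⟩ := mem_iUnion₂.1 hc
    obtain ⟨b, hb, hdb⟩ := mem_iUnion₂.1 hd
    have houter {z} (hz : z ∈ c.carrier ∩ d.carrier) (hz1 : 1 ≤ ‖h z‖) : z ∈ range w ∪ Z := by
      obtain rfl | hab := eq_or_ne a b
      · exact absurd ((hN a ha).norm_lt_one hca hdb hcd z hz) hz1.not_gt
      · rcases hD.inter_subset ha hb hab ⟨(hN a ha).mem_carrier c hca z hz.1 hz1,
          (hN b hb).mem_carrier d hdb z hz.2 hz1⟩ with h | h | h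
        exacts [.inl h, absurd h hz1.not_gt, .inr h]
    intro z hz
    rcases le_or_gt 1 ‖h z‖ with hz1 | hz1
    · exact houter hz hz1
    by_cases hz0 : h z = 0
    · exact .inl ⟨v₀, h.injective (by rw [hh.apply_hub, hz0])⟩
    obtain ⟨y, hy, hy1⟩ := ((hN a ha).isRadial c hca).exists_mem_inter
      ((hN b hb).isRadial d hdb) hz.1 hz.2 hz1 hz0
    rcases houter hy hy1.ge with ⟨v, rfl⟩ | hyZ
    · simp [hh.eq_hub v hy1.le, hh.apply_hub] at hy1
    · exact absurd hy1 (hZ y hyZ).ne'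
  · refine reachable_arcGraph_le fun a ha hal => hal ▸ (hN a ha).reachable.mono ?_
    exact arcGraph_mono (subset_biUnion_of_mem (u := N) ha) _

theorem IsDrawing.exists_reroute_finset {s : Finset V} {h : V → E ≃ₜ E}
    (hh : ∀ v ∈ s, IsHubDisc w Reg v (h v))
    (hdisj : (s : Set V).PairwiseDisjoint fun v => {x | ‖h v x‖ ≤ 1})
    (hD : IsDrawing w Reg (⋃ v ∈ s, {x | ‖h v x‖ < 1}) D) :
    ∃ D', IsDrawing w Reg ∅ D' ∧ ∀ l, (arcGraph D l).Reachable ≤ (arcGraph D' l).Reachable := by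
  classical
  induction s using Finset.induction_on generalizing D with
  | empty => exact ⟨D, by simpa using hD, fun l => le_rfl⟩
  | insert v s hv ih =>
    simp only [Finset.mem_insert, forall_eq_or_imp] at hh
    rw [Finset.set_biUnion_insert] at hD
    obtain ⟨D₁, hD₁, hreach₁⟩ := hD.exists_reroute hh.1 fun x hx => by
      obtain ⟨u, hu, hxu⟩ := mem_iUnion₂.1 hx
      have huv : Disjoint {x | ‖h v x‖ ≤ 1} {x | ‖h u x‖ ≤ 1} :=
        hdisj (by simp) (by simp [hu]) fun h => hv (h ▸ hu)
      exact not_le.1 fun hxv => disjoint_left.1 huv hxv (le_of_lt (show ‖h u x‖ < 1 from hxu))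
    obtain ⟨D₂, hD₂, hreach₂⟩ := ih hh.2 (hdisj.subset (by simp)) hD₁
    exact ⟨D₂, hD₂, fun l => (hreach₁ l).trans (hreach₂ l)⟩

end Drawings

section InitialDrawing

open Set

/-- The arcs with label `l` into which the points `e 0, e 1, …`, passed at the times `0, 1, …`,
divide the curve `f`. -/
def chain {V L E : Type*} (l : L) (f : ℝ → E) {m : ℕ} (e : Fin m → V) :
    Set (LabelledArc V L E) :=
  {a | ∃ i j : Fin m, (i : ℕ) + 1 = j ∧ a = ⟨l, e i, e j, f '' Icc i j⟩}

section Chain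

variable {V L E : Type*} {w : V → E} {f : ℝ → E} {m : ℕ} {e : Fin m → V}

theorem reachable_arcGraph_chain (l : L) (f : ℝ → E) (e : Fin m → V) (i j : Fin m) :
    (arcGraph (chain l f e) l).Reachable (e i) (e j) := by
  have hzero (n : ℕ) (hn : n < m) :
      (arcGraph (chain l f e) l).Reachable (e ⟨0, n.zero_le.trans_lt hn⟩) (e ⟨n, hn⟩) := by
    induction n with
    | zero => rfl
    | succ n ih =>
      have hn' : n < m := n.lt_succ_self.trans hn
      refine (ih hn').trans (arcGraph_reachable
        (a := ⟨l, e ⟨n, hn'⟩, e ⟨n + 1, hn⟩, f '' Icc n (n + 1 : ℕ)⟩) ?_)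
      exact ⟨⟨n, hn'⟩, ⟨n + 1, hn⟩, rfl, rfl⟩
  exact (hzero i i.2).symm.trans (hzero j j.2)

theorem pairwise_chain (l : L) (hfi : Function.Injective f) (hfe : ∀ i : Fin m, f i = w (e i)) :
    (chain l f e).Pairwise fun a b => a.carrier ∩ b.carrier ⊆ range w := by
  have hlt {i j i' j' : Fin m} (hij : (i : ℕ) + 1 = j) (hii' : i < i') :
      f '' Icc (i : ℝ) j ∩ f '' Icc (i' : ℝ) j' ⊆ range w := by
    rw [← image_inter hfi]
    rintro _ ⟨t, ⟨⟨-, htj⟩, hit, -⟩, rfl⟩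
    have hji' : (j : ℝ) ≤ i' := by
      have : (j : ℕ) ≤ i' := hij ▸ hii'
      exact_mod_cast this
    exact ⟨e i', by rw [← hfe, (htj.trans hji').antisymm hit]⟩
  rintro _ ⟨i, j, hij, rfl⟩ _ ⟨i', j', hij', rfl⟩ hne
  rcases lt_trichotomy i i' with h | rfl | h
  · exact hlt hij h
  · exact absurd (by rw [Fin.ext (hij.symm.trans hij')]) hne
  · rw [inter_comm]
    exact hlt hij' h

theorem isAdmissible_of_mem_chain [TopologicalSpace E] {Reg : L → Set E} {l : L}
    (hf : Continuous f) (hfi : Function.Injective f) (hfe : ∀ i : Fin m, f i = w (e i))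
    (hfU : MapsTo f (Icc 0 m) (Reg l))
    (he : ∀ v, w v ∈ Reg l → v ∈ range e) {a : LabelledArc V L E} (ha : a ∈ chain l f e) :
    a.IsAdmissible w Reg := by
  obtain ⟨i, j, hij, rfl⟩ := ha
  have hsub : f '' Icc (i : ℝ) j ⊆ Reg l := by
    refine (hfU.mono_left (Icc_subset_Icc (Nat.cast_nonneg _) ?_)).image_subset
    exact_mod_cast j.2.le
  refine ⟨?_, hsub, fun v hv => ?_⟩
  · have hlt : (i : ℝ) < j := by exact_mod_cast Nat.lt_of_succ_le hij.le
    simpa only [hfe] using isArc_image_Icc hlt hf.continuousOn hfi.injOn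
  · obtain ⟨i', rfl⟩ := he v (hsub hv)
    rw [← hfe, hfi.mem_set_image, mem_Icc, Nat.cast_le, Nat.cast_le] at hv
    have : i' = i ∨ i' = j := by omega
    exact this.imp (congrArg e) (congrArg e)

end Chain

theorem exists_forall_isThinCurveThrough {κ : Type*} {U : κ → Set Plane}
    (hU : ∀ k, IsOpen (U k)) (hc : ∀ k, IsConnected (U k)) {m : κ → ℕ} {c : ∀ k, Fin (m k) → Plane}
    (hcU : ∀ k i, c k i ∈ U k) (hci : ∀ k, Function.Injective (c k)) (s : Finset κ) :
    ∃ f : κ → ℝ → Plane, (∀ k ∈ s, IsThinCurveThrough (U k) (c k) (f k)) ∧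
      (s : Set κ).Pairwise fun k k' => (f k '' Icc 0 (m k) ∩ f k' '' Icc 0 (m k')).Finite := by
  classical
  induction s using Finset.induction_on with
  | empty => exact ⟨fun _ _ => 0, by simp, by simp⟩
  | insert k s hk ih =>
    obtain ⟨f, hf, hfin⟩ := ih
    obtain ⟨g, hg, hgfin⟩ := exists_isThinCurveThrough (hU k) (hc k) (hcU k) (hci k)
      (.biUnion s.finite_toSet fun k' hk' => (hf k' hk').isThin)
    have hupdate (k') (hk' : k' ∈ s) : Function.update f k g k' = f k' :=
      Function.update_of_ne (ne_of_mem_of_not_mem hk' hk) _ _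
    refine ⟨Function.update f k g, ?_, ?_⟩
    · rw [Finset.forall_mem_insert, Function.update_self]
      exact ⟨hg, fun k' hk' => hupdate k' hk' ▸ hf k' hk'⟩
    · have hinter (k') (hk' : k' ∈ s) : (g '' Icc 0 (m k) ∩ f k' '' Icc 0 (m k')).Finite :=
        hgfin.subset (inter_subset_inter_right _ (subset_biUnion_of_mem
          (u := fun k' => f k' '' Icc 0 (m k' : ℝ)) hk'))
      rw [Finset.coe_insert, pairwise_insert]
      refine ⟨fun i hi j hj hij => ?_, fun k' hk' _ => ?_⟩
      · simp only [hupdate i hi, hupdate j hj]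
        exact hfin hi hj hij
      · simp only [hupdate k' hk', Function.update_self, inter_comm (f k' '' _), and_self]
        exact hinter k' hk'

theorem exists_isDrawing_finite_crossings {V κ : Type*} [Finite V] [Finite κ] {w : V → Plane}
    (hw : Function.Injective w) {U : κ → Set Plane} (hU : ∀ k, IsOpen (U k))
    (hc : ∀ k, IsConnected (U k)) : ∃ (D : Set (LabelledArc V κ Plane)) (X : Set Plane),
      X.Finite ∧ (∀ x ∈ X, ∃ k k', k ≠ k' ∧ x ∈ U k ∩ U k') ∧ IsDrawing w U X D ∧
      ∀ k u v, w u ∈ U k → w v ∈ U k → (arcGraph D k).Reachable u v := by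
  have := Fintype.ofFinite κ
  let e (k : κ) : Fin (Nat.card {v // w v ∈ U k}) ≃ {v // w v ∈ U k} := (Finite.equivFin _).symm
  obtain ⟨f, hf, hfin⟩ := exists_forall_isThinCurveThrough hU hc
    (c := fun k i => w (e k i)) (fun k i => (e k i).2)
    (fun k => hw.comp (Subtype.val_injective.comp (e k).injective)) .univ
  replace hf k := hf k (Finset.mem_univ k)
  let K (k : κ) : Set Plane := f k '' Icc 0 (Nat.card {v // w v ∈ U k})
  let A (k : κ) : Set (LabelledArc V κ Plane) := chain k (f k) fun i => (e k i : V)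
  have hAK {k a} (ha : a ∈ A k) : a.carrier ⊆ K k := by
    obtain ⟨i, j, -, rfl⟩ := ha
    exact image_mono (Icc_subset_Icc (Nat.cast_nonneg _) (mod_cast j.2.le))
  refine ⟨⋃ k, A k, ⋃ k, ⋃ k', ⋃ _ : k ≠ k', K k ∩ K k', ?_, ?_, ⟨?_, ?_⟩, ?_⟩
  · exact finite_iUnion fun k => finite_iUnion fun k' => finite_iUnion fun hne =>
      hfin (by simp) (by simp) hne
  · simp only [mem_iUnion]
    rintro x ⟨k, k', hne, hx, hx'⟩
    exact ⟨k, k', hne, (hf k).mapsTo.image_subset hx, (hf k').mapsTo.image_subset hx'⟩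
  · simp only [mem_iUnion]
    rintro a ⟨k, ha⟩
    exact isAdmissible_of_mem_chain (hf k).continuous (hf k).injective (hf k).apply_eq
      (hf k).mapsTo (fun v hv => ⟨(e k).symm ⟨v, hv⟩, by simp⟩) ha
  · intro a ha b hb hab
    obtain ⟨k, ha⟩ := mem_iUnion.1 ha
    obtain ⟨k', hb⟩ := mem_iUnion.1 hb
    obtain rfl | hne := eq_or_ne k k'
    · exact (pairwise_chain k (hf k).injective (hf k).apply_eq ha hb hab).trans
        subset_union_left
    · refine (inter_subset_inter (hAK ha) (hAK hb)).trans (subset_union_of_subset_right ?_ _)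
      exact subset_iUnion_of_subset k (subset_iUnion₂_of_subset k' hne subset_rfl)
  · intro k u v hu hv
    have hreach := reachable_arcGraph_chain k (f k) (fun i => (e k i : V)) ((e k).symm ⟨u, hu⟩)
      ((e k).symm ⟨v, hv⟩)
    rw [Equiv.apply_symm_apply, Equiv.apply_symm_apply] at hreach
    exact hreach.mono (arcGraph_mono (subset_iUnion A k) k)

end InitialDrawing

section CrossingFreeDrawing

open Set Function

variable {V L κ : Type*}

/-- Hubs for the regions `Reg l`: the vertices in `s`, with pairwise disjoint domains `C v` that
lie in every region they meet and together contain every point common to two regions. -/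
structure IsHubSystem {E : Type*} [TopologicalSpace E] (w : V → E) (Reg : L → Set E)
    (s : Finset V) (C : V → Set E) : Prop where
  isOpen : ∀ v ∈ s, IsOpen (C v)
  isConnected : ∀ v ∈ s, IsConnected (C v)
  mem : ∀ v ∈ s, w v ∈ C v
  pairwiseDisjoint : (s : Set V).PairwiseDisjoint C
  subset_region : ∀ v ∈ s, ∀ l, (C v ∩ Reg l).Nonempty → C v ⊆ Reg l
  inter_subset : Pairwise fun l l' => Reg l ∩ Reg l' ⊆ ⋃ v ∈ s, C v

section Plane

variable [Finite V] {w : V → Plane} {Reg : L → Set Plane} {s : Finset V} {C : V → Set Plane}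

theorem IsHubSystem.exists_isHubDisc (hC : IsHubSystem w Reg s C) (hw : Injective w) {v : V}
    (hv : v ∈ s) {X : Set Plane} (hX : X.Finite) : ∃ h : Plane ≃ₜ Plane,
      IsHubDisc w Reg v h ∧ (∀ x ∈ (X ∩ C v) \ range w, ‖h x‖ < 1) ∧ ∀ x, ‖h x‖ ≤ 1 → x ∈ C v := by
  have hfin : (w '' {v}ᶜ).Finite := toFinite _
  obtain ⟨h, hv0, hX1, hU⟩ := exists_homeomorph_norm_lt_one
    ((hC.isOpen v hv).sdiff hfin.isClosed)
    (isPathConnected_sdiff_countable (one_lt_rank_euclideanSpace _) (hC.isOpen v hv)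
      (hC.isConnected v hv) hfin.countable).isConnected
    (v := w v) ⟨hC.mem v hv, by simp [hw.eq_iff]⟩ (X := (X ∩ C v) \ range w)
    (hX.subset (sdiff_subset.trans inter_subset_left))
    (fun x hx => ⟨hx.1.2, fun hxw => hx.2 (image_subset_range _ _ hxw)⟩)
  refine ⟨h, ⟨hv0, fun u hu => ?_, fun l x y hx hx1 hy1 => ?_⟩, hX1, fun x hx => (hU x hx).1⟩
  · by_contra huv
    exact (hU _ hu).2 (mem_image_of_mem w huv)
  · exact hC.subset_region v hv l ⟨x, (hU x hx1).1, hx⟩ (hU y hy1).1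

theorem IsHubSystem.exists_isDrawing_of_isConnected [Finite L] (hC : IsHubSystem w Reg s C)
    (hw : Injective w) (hReg : ∀ l, IsOpen (Reg l)) (hc : ∀ l, IsConnected (Reg l)) :
    ∃ D, IsDrawing w Reg ∅ D ∧
      ∀ l u v, w u ∈ Reg l → w v ∈ Reg l → (arcGraph D l).Reachable u v := by
  obtain ⟨D, X, hX, hXReg, hD, hreach⟩ := exists_isDrawing_finite_crossings hw hReg hc
  have hdisc : ∀ v ∈ s, ∃ h : Plane ≃ₜ Plane, IsHubDisc w Reg v h ∧
      (∀ x ∈ (X ∩ C v) \ range w, ‖h x‖ < 1) ∧ ∀ x, ‖h x‖ ≤ 1 → x ∈ C v :=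
    fun v hv => hC.exists_isHubDisc hw hv hX
  choose! h hh hXh hhC using hdisc
  have hdisj : (s : Set V).PairwiseDisjoint fun v => {x | ‖h v x‖ ≤ 1} :=
    hC.pairwiseDisjoint.mono_on hhC
  have hD' : IsDrawing w Reg (⋃ v ∈ s, {x | ‖h v x‖ < 1}) D := by
    refine ⟨hD.isAdmissible, fun a ha b hb hab x hx => ?_⟩
    by_cases hxw : x ∈ range w
    · exact .inl hxw
    have hxX : x ∈ X := (hD.inter_subset ha hb hab hx).resolve_left hxw
    obtain ⟨k, k', hne, hxk⟩ := hXReg x hxX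
    obtain ⟨v, hv, hxv⟩ := mem_iUnion₂.1 (hC.inter_subset hne hxk)
    exact .inr (mem_biUnion hv (hXh v hv x ⟨⟨hxX, hxv⟩, hxw⟩))
  obtain ⟨D', hD', hle⟩ := hD'.exists_reroute_finset hh hdisj
  exact ⟨D', hD', fun l u v hu hv => hle l u v (hreach l u v hu hv)⟩

end Plane

/-- The same arc, with its label replaced by the image under `φ`. -/
def LabelledArc.relabel {E : Type*} (φ : κ → L) (a : LabelledArc V κ E) : LabelledArc V L E :=
  ⟨φ a.label, a.source, a.target, a.carrier⟩

theorem IsDrawing.relabel {E : Type*} [TopologicalSpace E] {w : V → E} {U : κ → Set E} {Z : Set E}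
    {D : Set (LabelledArc V κ E)} (hD : IsDrawing w U Z D) {Reg : L → Set E} {φ : κ → L}
    (hφ : ∀ k, U k ⊆ Reg (φ k)) : IsDrawing w Reg Z (LabelledArc.relabel φ '' D) := by
  constructor
  · rintro _ ⟨a, ha, rfl⟩
    obtain ⟨harc, hsub, hv⟩ := hD.isAdmissible a ha
    exact ⟨harc, hsub.trans (hφ _), hv⟩
  · rintro _ ⟨_, ha, rfl⟩ _ ⟨_, hb, rfl⟩ hab
    exact hD.inter_subset ha hb (ne_of_apply_ne _ hab)

theorem reachable_arcGraph_relabel {E : Type*} (D : Set (LabelledArc V κ E)) (φ : κ → L) (k : κ) :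
    (arcGraph D k).Reachable ≤ (arcGraph (LabelledArc.relabel φ '' D) (φ k)).Reachable :=
  reachable_arcGraph_le fun _ ha hak => hak ▸ arcGraph_reachable (mem_image_of_mem _ ha)

/-- The path components of the regions `Reg l` that contain a vertex, with their labels. -/
def vertexComponents {E : Type*} [TopologicalSpace E] (w : V → E) (Reg : L → Set E) :
    Set (L × Set E) :=
  {k | ∃ l v, w v ∈ Reg l ∧ (l, pathComponentIn (Reg l) (w v)) = k}

theorem finite_vertexComponents {E : Type*} [TopologicalSpace E] [Finite V] [Finite L] (w : V → E)
    (Reg : L → Set E) : (vertexComponents w Reg).Finite := by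
  refine (finite_range fun p : L × V => (p.1, pathComponentIn (Reg p.1) (w p.2))).subset ?_
  rintro _ ⟨l, u, _, rfl⟩
  exact ⟨(l, u), rfl⟩

theorem IsHubSystem.of_vertexComponents {E : Type*} [TopologicalSpace E]
    [LocallyPathConnectedSpace E] {w : V → E} {Reg : L → Set E} {s : Finset V} {C : V → Set E}
    (hC : IsHubSystem w Reg s C) :
    IsHubSystem w (fun k : vertexComponents w Reg => k.1.2) s C where
  isOpen := hC.isOpen
  isConnected := hC.isConnected
  mem := hC.mem
  pairwiseDisjoint := hC.pairwiseDisjoint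
  subset_region := by
    rintro v hv ⟨_, l, u, hu, rfl⟩ ⟨x, hxC, hx⟩
    have hCl : C v ⊆ Reg l := hC.subset_region v hv l ⟨x, hxC, pathComponentIn_subset hx⟩
    have hpath := (hC.isOpen v hv).isConnected_iff_isPathConnected.1 (hC.isConnected v hv)
    exact (hpath.subset_pathComponentIn hxC hCl).trans_eq (pathComponentIn_congr hx)
  inter_subset := by
    rintro ⟨_, l, u, hu, rfl⟩ ⟨_, l', u', hu', rfl⟩ hne x ⟨hx, hx'⟩
    obtain rfl | hll' := eq_or_ne l l'
    · have heq := (pathComponentIn_congr hx).symm.trans (pathComponentIn_congr hx')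
      exact (hne (Subtype.ext (Prod.ext rfl heq))).elim
    · exact hC.inter_subset hll' ⟨pathComponentIn_subset hx, pathComponentIn_subset hx'⟩

theorem IsHubSystem.exists_isDrawing [Finite V] [Finite L] {w : V → Plane} {Reg : L → Set Plane}
    {s : Finset V} {C : V → Set Plane} (hC : IsHubSystem w Reg s C) (hw : Injective w)
    (hReg : ∀ l, IsOpen (Reg l)) : ∃ D, IsDrawing w Reg ∅ D ∧
      ∀ l u v, JoinedIn (Reg l) (w u) (w v) → (arcGraph D l).Reachable u v := by
  have : Finite (vertexComponents w Reg) := finite_vertexComponents w Reg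
  obtain ⟨D, hD, hreach⟩ := hC.of_vertexComponents.exists_isDrawing_of_isConnected hw
    (by
      rintro ⟨_, l, u, hu, rfl⟩
      exact (hReg l).pathComponentIn _)
    (by
      rintro ⟨_, l, u, hu, rfl⟩
      exact (isPathConnected_pathComponentIn hu).isConnected)
  refine ⟨_, hD.relabel (Reg := Reg) (φ := fun k => k.1.1) ?_, fun l u v huv => ?_⟩
  · rintro ⟨_, l, u, hu, rfl⟩
    exact pathComponentIn_subset
  · let k : vertexComponents w Reg := ⟨_, l, u, huv.source_mem, rfl⟩
    exact reachable_arcGraph_relabel D _ k u v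
      (hreach k u v (mem_pathComponentIn_self huv.source_mem) huv)

end CrossingFreeDrawing

section GraphDrawings

open Set Function SimpleGraph

variable {V L E : Type*} [TopologicalSpace E] {w : V → E} {Reg : L → Set E}
  {T : L → SimpleGraph V} {arc : L → Sym2 V → Set E}

/-- A crossing-free drawing of the graphs `T l`, viewed as one multigraph with edges labelled by
`l`: the edge `e` of `T l` is drawn as the arc `arc l e` inside `Reg l`. -/
structure IsGraphDrawing (w : V → E) (Reg : L → Set E) (T : L → SimpleGraph V)
    (arc : L → Sym2 V → Set E) : Prop where
  isArc : ∀ l u v, (T l).Adj u v → IsArc (arc l s(u, v)) (w u) (w v)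
  subset : ∀ l, ∀ e ∈ (T l).edgeSet, arc l e ⊆ Reg l
  mem_of_mem : ∀ l, ∀ e ∈ (T l).edgeSet, ∀ v, w v ∈ arc l e → v ∈ e
  inter_subset : ∀ l l', ∀ e ∈ (T l).edgeSet, ∀ e' ∈ (T l').edgeSet, (l, e) ≠ (l', e') →
    arc l e ∩ arc l' e' ⊆ range w

theorem IsDrawing.exists_isGraphDrawing {D : Set (LabelledArc V L E)} (hD : IsDrawing w Reg ∅ D)
    (hT : ∀ l, T l ≤ arcGraph D l) : ∃ arc, IsGraphDrawing w Reg T arc := by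
  have hex : ∀ (l : L) (e : Sym2 V), e ∈ (T l).edgeSet →
      ∃ S, ∃ a ∈ D, a.label = l ∧ s(a.source, a.target) = e ∧ a.carrier = S := by
    intro l e he
    obtain ⟨a, ⟨haD, hal⟩, hae⟩ := (edgeSet_fromEdgeSet _ ▸ edgeSet_mono (hT l) he).1
    exact ⟨_, a, haD, hal, hae, rfl⟩
  choose! arc harc using hex
  refine ⟨arc, fun l u v huv => ?_, fun l e he => ?_, fun l e he v hv => ?_,
    fun l l' e he e' he' hne => ?_⟩
  · obtain ⟨a, haD, -, hae, ha⟩ := harc l s(u, v) huv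
    rw [← ha]
    obtain ⟨rfl, rfl⟩ | ⟨rfl, rfl⟩ := Sym2.eq_iff.1 hae
    · exact (hD.isAdmissible a haD).isArc
    · exact (hD.isAdmissible a haD).isArc.symm
  · obtain ⟨a, haD, rfl, -, ha⟩ := harc l e he
    exact ha ▸ (hD.isAdmissible a haD).subset
  · obtain ⟨a, haD, -, hae, ha⟩ := harc l e he
    exact hae ▸ Sym2.mem_iff.2 ((hD.isAdmissible a haD).eq_or_eq v (ha ▸ hv))
  · obtain ⟨a, haD, hal, hae, ha⟩ := harc l e he
    obtain ⟨a', haD', hal', hae', ha'⟩ := harc l' e' he'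
    rw [← ha, ← ha', ← union_empty (range w)]
    refine hD.inter_subset haD haD' fun h => hne ?_
    rw [← hal, ← hal', ← hae, ← hae', h]

theorem IsGraphDrawing.joinedIn_of_adj (h : IsGraphDrawing w Reg T arc) {l : L} {u v : V}
    (huv : (T l).Adj u v) : JoinedIn (Reg l) (w u) (w v) :=
  (h.isArc l u v huv).joinedIn.mono (h.subset l s(u, v) huv)

theorem IsGraphDrawing.joinedIn_of_reachable (h : IsGraphDrawing w Reg T arc) {l : L} {u v : V}
    (hu : w u ∈ Reg l) (huv : (T l).Reachable u v) : JoinedIn (Reg l) (w u) (w v) := by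
  rw [reachable_iff_reflTransGen] at huv
  induction huv with
  | refl => exact .refl hu
  | tail _ hadj ih => exact ih.trans (h.joinedIn_of_adj hadj)

theorem IsGraphDrawing.isTree_induce (h : IsGraphDrawing w Reg T arc) {l : L}
    (hac : (T l).IsAcyclic) {u : V} (hu : w u ∈ Reg l)
    (hreach : ∀ v, JoinedIn (Reg l) (w u) (w v) → (T l).Reachable u v) :
    ((T l).induce {v | JoinedIn (Reg l) (w u) (w v)}).IsTree := by
  have hsupp : {v | JoinedIn (Reg l) (w u) (w v)} = ((T l).connectedComponentMk u).supp := by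
    ext v
    rw [ConnectedComponent.mem_supp_iff, ConnectedComponent.eq]
    exact ⟨fun hv => (hreach v hv).symm, fun hv => h.joinedIn_of_reachable hu hv.symm⟩
  rw [hsupp]
  exact hac.isTree_connectedComponent _

theorem IsGraphDrawing.sdiff_inter_sdiff_eq_empty (h : IsGraphDrawing w Reg T arc) {l l' : L}
    {e e' : Sym2 V} (he : e ∈ (T l).edgeSet) (he' : e' ∈ (T l').edgeSet) (hne : (l, e) ≠ (l', e')) :
    (arc l e \ w '' {v | v ∈ e}) ∩ (arc l' e' \ w '' {v | v ∈ e'}) = ∅ := by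
  refine eq_empty_of_forall_notMem fun x ⟨⟨hx, hxe⟩, hx', _⟩ => hxe ?_
  obtain ⟨v, rfl⟩ := h.inter_subset l l' e he e' he' hne ⟨hx, hx'⟩
  exact mem_image_of_mem w (h.mem_of_mem l e he v hx)

theorem IsGraphDrawing.weaklyPlanar {w : V → Plane} {Reg : L → Set Plane}
    {arc : L → Sym2 V → Set Plane} (h : IsGraphDrawing w Reg T arc) : WeaklyPlanar (⨆ l, T l) := by
  let φ : Plane ≃ₜ ℂ := Complex.orthonormalBasisOneI.repr.symm.toHomeomorph
  refine ⟨φ ∘ w, fun u v => φ '' {x | ∃ l, (T l).Adj u v ∧ x ∈ arc l s(u, v)}, ?_, ?_⟩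
  · intro u v huv
    obtain ⟨l, hl⟩ := iSup_adj.1 huv
    exact ((h.isArc l u v hl).joinedIn.map φ.continuous).mono
      (image_mono fun x hx => ⟨l, hl, hx⟩)
  · rintro a b c d - - hnodup
    refine (disjoint_image_iff φ.injective).2 (Set.disjoint_left.2 ?_)
    rintro x ⟨l, hl, hx⟩ ⟨l', hl', hx'⟩
    have hne : s(a, b) ≠ s(c, d) := by grind
    obtain ⟨v, rfl⟩ := h.inter_subset l l' _ hl _ hl' (ne_of_apply_ne Prod.snd hne) ⟨hx, hx'⟩
    have hv := h.mem_of_mem l _ hl v hx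
    have hv' := h.mem_of_mem l' _ hl' v hx'
    grind

end GraphDrawings

section EdgeCount

open Finset SimpleGraph

theorem card_edgeSet_le_card_sub_one {V : Type*} [Finite V] {G : SimpleGraph V}
    (hG : G.IsAcyclic) : Nat.card G.edgeSet ≤ Nat.card V - 1 := by
  obtain _ | _ := isEmpty_or_nonempty V
  · simp
  obtain ⟨F, hGF, -, hF⟩ := connected_top.exists_isTree_le_of_le_of_isAcyclic le_top hG
  have hcard := (isTree_iff_connected_and_card.1 hF).2
  have hle := Nat.card_mono (Set.toFinite _) (edgeSet_mono hGF)
  omega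

theorem succ_le_card_union {ι : Type*} [DecidableEq ι] {s t : Finset ι} {k : ℕ} (hs : #s = k)
    (ht : #t = k) (hst : s ≠ t) : k + 1 ≤ #(s ∪ t) := by
  by_contra! h
  have hs' := eq_of_subset_of_card_le (subset_union_left (s₁ := s) (s₂ := t)) (by omega)
  have ht' := eq_of_subset_of_card_le (subset_union_right (s₁ := s) (s₂ := t)) (by omega)
  exact hst (hs'.trans ht'.symm)

variable {ι P B : Type*} {k : ℕ} {σ st : P → Finset ι} {T : Finset ι → SimpleGraph (P × B)}

theorem ncard_edges_in_fiber_le [Finite B] {G : SimpleGraph (P × B)} (hG : G.IsAcyclic) (p : P) :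
    {e ∈ G.edgeSet | ∀ v ∈ e, v.1 = p}.ncard ≤ Nat.card B - 1 := by
  refine le_trans ?_ (card_edgeSet_le_card_sub_one (hG.of_comap (.sectR p B)))
  rw [Nat.card_coe_set_eq]
  refine (Set.ncard_le_ncard ?_ (Set.toFinite _)).trans
    (Set.ncard_image_le (f := Sym2.map (Prod.mk p)))
  rintro ⟨⟨q, i⟩, ⟨q', j⟩⟩ ⟨he, hp⟩
  obtain rfl : q = p := hp _ (Sym2.mem_mk_left _ _)
  obtain rfl : q' = q := hp _ (Sym2.mem_mk_right _ _)
  exact ⟨s(i, j), he, rfl⟩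

/-- An edge with label `τ` between two points of a face `p` is extra if `τ` is not the label `st p`
set aside for `p`. Only extra edges can be parallel to an edge with another label. -/
def IsExtraEdge (st : P → Finset ι) (τ : Finset ι) (e : Sym2 (P × B)) : Prop :=
  ∃ p, (∀ v ∈ e, v.1 = p) ∧ τ ≠ st p

theorem eq_of_not_isExtraEdge (hσ : Function.Injective σ) (hc : ∀ p, #(σ p) = k + 1)
    {τ τ' : Finset ι} (hτ : #τ = k) (hτ' : #τ' = k) {e : Sym2 (P × B)}
    (he : ∀ v ∈ e, τ ⊆ σ v.1) (he' : ∀ v ∈ e, τ' ⊆ σ v.1) (hex : ¬IsExtraEdge st τ e)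
    (hex' : ¬IsExtraEdge st τ' e) : τ = τ' := by
  classical
  by_contra hne
  have hunion : ∀ v ∈ e, τ ∪ τ' = σ v.1 := fun v hv => eq_of_subset_of_card_le
    (union_subset (he v hv) (he' v hv)) ((hc v.1).trans_le (succ_le_card_union hτ hτ' hne))
  obtain ⟨u, hu⟩ : ∃ u, u ∈ e := ⟨_, e.out_fst_mem⟩
  have hfiber : ∀ v ∈ e, v.1 = u.1 := fun v hv => hσ ((hunion v hv).symm.trans (hunion u hu))
  simp only [IsExtraEdge, not_exists, not_and, not_not] at hex hex'
  exact hne ((hex u.1 hfiber).trans (hex' u.1 hfiber).symm)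

theorem sum_ncard_not_isExtraEdge_le [Finite P] [Finite B] (hσ : Function.Injective σ)
    (hc : ∀ p, #(σ p) = k + 1) {F : Finset (Finset ι)} (hF : ∀ τ ∈ F, #τ = k)
    (hT : ∀ τ, ∀ e ∈ (T τ).edgeSet, ∀ v ∈ e, τ ⊆ σ v.1) :
    ∑ τ ∈ F, {e ∈ (T τ).edgeSet | ¬IsExtraEdge st τ e}.ncard ≤
      Nat.card (⨆ τ, T τ : SimpleGraph (P × B)).edgeSet := by
  classical
  have := Fintype.ofFinite (Sym2 (P × B))
  simp_rw [Nat.card_coe_set_eq, Set.ncard_eq_toFinset_card']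
  rw [← card_biUnion]
  · refine card_le_card (biUnion_subset.2 fun τ _ e he => ?_)
    simp only [Set.mem_toFinset, Set.mem_ofPred_eq] at he ⊢
    exact edgeSet_mono (le_iSup T τ) he.1
  · refine fun τ hτ τ' hτ' hne => Finset.disjoint_left.2 fun e he he' => hne ?_
    simp only [Set.mem_toFinset, Set.mem_ofPred_eq] at he he'
    exact eq_of_not_isExtraEdge hσ hc (hF τ hτ) (hF τ' hτ') (hT τ e he.1) (hT τ' e he'.1) he.2 he'.2

variable [Fintype P]

theorem ncard_isExtraEdge_le [Finite B] [DecidableEq ι] {τ : Finset ι} (hac : (T τ).IsAcyclic)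
    (hT : ∀ e ∈ (T τ).edgeSet, ∀ v ∈ e, τ ⊆ σ v.1) :
    {e ∈ (T τ).edgeSet | IsExtraEdge st τ e}.ncard ≤
      #{p | τ ⊆ σ p ∧ τ ≠ st p} * (Nat.card B - 1) := by
  rw [← smul_eq_mul, ← sum_const]
  refine le_trans ?_ (sum_le_sum fun p _ => ncard_edges_in_fiber_le hac p)
  refine (Set.ncard_le_ncard ?_ (Set.toFinite _)).trans (set_ncard_biUnion_le _ _)
  rintro e ⟨he, p, hp, hτ⟩
  have hsub : τ ⊆ σ p := hp _ e.out_fst_mem ▸ hT e he _ e.out_fst_mem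
  exact Set.mem_biUnion (mem_filter_univ p |>.2 ⟨hsub, hτ⟩) ⟨he, hp⟩

theorem sum_card_filter_subset_ne_le [DecidableEq ι] (hc : ∀ p, #(σ p) = k + 1)
    (hst : ∀ p, st p ⊆ σ p) (hstk : ∀ p, #(st p) = k) {F : Finset (Finset ι)}
    (hF : ∀ τ ∈ F, #τ = k) : ∑ τ ∈ F, #{p | τ ⊆ σ p ∧ τ ≠ st p} ≤ Fintype.card P * k := by
  refine (sum_card_bipartiteAbove_eq_sum_card_bipartiteBelow
    (r := fun τ p => τ ⊆ σ p ∧ τ ≠ st p)).trans_le ?_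
  refine sum_le_card_nsmul _ _ _ fun p _ => ?_
  have hsub : {τ ∈ F | τ ⊆ σ p ∧ τ ≠ st p} ⊆ (powersetCard k (σ p)).erase (st p) := by
    simp +contextual [subset_iff, mem_powersetCard, hF]
  refine (card_le_card hsub).trans ?_
  rw [card_erase_of_mem (mem_powersetCard.2 ⟨hst p, hstk p⟩), card_powersetCard, hc p]
  simp

theorem sum_card_edgeSet_le [Finite B] (hσ : Function.Injective σ) (hc : ∀ p, #(σ p) = k + 1)
    {F : Finset (Finset ι)} (hF : ∀ τ ∈ F, #τ = k) (hac : ∀ τ, (T τ).IsAcyclic)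
    (hT : ∀ τ, ∀ e ∈ (T τ).edgeSet, ∀ v ∈ e, τ ⊆ σ v.1) :
    ∑ τ ∈ F, Nat.card (T τ).edgeSet ≤
      Nat.card (⨆ τ, T τ : SimpleGraph (P × B)).edgeSet +
        k * (Nat.card B - 1) * Fintype.card P := by
  classical
  have hst : ∀ p, ∃ τ ⊆ σ p, #τ = k := fun p => exists_subset_card_eq (by simp [hc p])
  choose st hst hstk using hst
  have hsplit (τ : Finset ι) : Nat.card (T τ).edgeSet =
      {e ∈ (T τ).edgeSet | ¬IsExtraEdge st τ e}.ncard +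
        {e ∈ (T τ).edgeSet | IsExtraEdge st τ e}.ncard := by
    rw [Nat.card_coe_set_eq, add_comm]
    exact (Set.ncard_inter_add_ncard_sdiff_eq_ncard _ {e | IsExtraEdge st τ e}).symm
  calc ∑ τ ∈ F, Nat.card (T τ).edgeSet
      = ∑ τ ∈ F, {e ∈ (T τ).edgeSet | ¬IsExtraEdge st τ e}.ncard +
        ∑ τ ∈ F, {e ∈ (T τ).edgeSet | IsExtraEdge st τ e}.ncard := by
        simp_rw [hsplit, sum_add_distrib]
    _ ≤ Nat.card (⨆ τ, T τ : SimpleGraph (P × B)).edgeSet +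
        ∑ τ ∈ F, #{p | τ ⊆ σ p ∧ τ ≠ st p} * (Nat.card B - 1) :=
        add_le_add (sum_ncard_not_isExtraEdge_le hσ hc hF hT)
          (sum_le_sum fun τ _ => ncard_isExtraEdge_le (hac τ) (hT τ))
    _ ≤ Nat.card (⨆ τ, T τ : SimpleGraph (P × B)).edgeSet +
        k * (Nat.card B - 1) * Fintype.card P := by
        rw [← sum_mul, mul_right_comm, mul_comm k]
        gcongr
        exact sum_card_filter_subset_ne_le hc hst hstk hF

theorem sum_card_edgeSet_le_of_weaklyPlanar {P : Type*} [Finite P] [Finite B] {σ : P → Finset ι}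
    {T : Finset ι → SimpleGraph (P × B)} (hσ : Function.Injective σ) (hc : ∀ p, #(σ p) = k + 1)
    {F : Finset (Finset ι)} (hF : ∀ τ ∈ F, #τ = k) (hac : ∀ τ, (T τ).IsAcyclic)
    (hT : ∀ τ u v, (T τ).Adj u v → τ ⊆ σ u.1) (hplanar : WeaklyPlanar (⨆ τ, T τ)) :
    ∑ τ ∈ F, Nat.card (T τ).edgeSet ≤
      3 * (Nat.card B * Nat.card P) + k * (Nat.card B - 1) * Nat.card P := by
  have := Fintype.ofFinite P
  have := Fintype.ofFinite B
  have hsub : ∀ τ, ∀ e ∈ (T τ).edgeSet, ∀ v ∈ e, τ ⊆ σ v.1 := by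
    rintro τ ⟨p, q⟩ hpq v hv
    obtain rfl | rfl := Sym2.mem_iff.1 hv
    exacts [hT τ _ _ hpq, hT τ _ _ hpq.symm]
  have hcard : Nat.card (⨆ τ, T τ : SimpleGraph (P × B)).edgeSet ≤
      3 * (Nat.card B * Nat.card P) := by
    simpa [mul_comm] using hplanar.card_edgeSet_le
  rw [Nat.card_eq_fintype_card (α := P)] at hcard ⊢
  exact (sum_card_edgeSet_le hσ hc hF hac hsub).trans (Nat.add_le_add_right hcard _)

end EdgeCount

section NerveRegions

open Set Function

variable {α : Type*} {n k : ℕ} {A : Fin n → Set α} {σ τ : Finset (Fin n)} {x : α}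

theorem card_le_of_fNum_eq_zero (h : fNum A k = 0) (hx : x ∈ ⋂ i ∈ σ, A i) : σ.card ≤ k := by
  by_contra! hσ
  obtain ⟨ρ, hρσ, hρ⟩ := Finset.exists_subset_card_eq (Nat.succ_le_of_lt hσ)
  have : IsEmpty (NerveTop A k) :=
    (Nat.card_eq_zero.1 h).resolve_right (not_infinite_iff_finite.2 inferInstance)
  exact this.false ⟨ρ, hρ, x, biInter_subset_biInter_left hρσ hx⟩

theorem subset_of_mem_biInter (h : fNum A (k + 1) = 0) (hσ : σ.card = k + 1)
    (hxτ : x ∈ ⋂ i ∈ τ, A i) (hxσ : x ∈ ⋂ i ∈ σ, A i) : τ ⊆ σ := by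
  have hcard := card_le_of_fNum_eq_zero h
    ((Finset.set_biInter_inter τ σ A).symm ▸ ⟨hxτ, hxσ⟩ : x ∈ ⋂ i ∈ τ ∪ σ, A i)
  rw [Finset.eq_of_subset_of_card_le Finset.subset_union_right (hcard.trans_eq hσ.symm)]
  exact Finset.subset_union_left

/-- The intersection `A_τ` for `τ` of size `k`. Index sets of any other size get the empty region,
so that nothing can be drawn in it. -/
def levelRegion (A : Fin n → Set α) (k : ℕ) (τ : Finset (Fin n)) : Set α :=
  {x ∈ ⋂ i ∈ τ, A i | τ.card = k}

theorem levelRegion_of_card_eq (hτ : τ.card = k) : levelRegion A k τ = ⋂ i ∈ τ, A i :=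
  sep_eq_self_iff_mem_true.2 fun _ _ => hτ

theorem joinedIn_levelRegion_iff [TopologicalSpace α] {y : α} :
    JoinedIn (levelRegion A k τ) x y ↔ τ.card = k ∧ JoinedIn (⋂ i ∈ τ, A i) x y :=
  ⟨fun h => ⟨h.source_mem.2, h.mono (sep_subset _ _)⟩,
    fun ⟨hτ, h⟩ => (levelRegion_of_card_eq hτ).symm ▸ h⟩

theorem isOpen_levelRegion [TopologicalSpace α] (h : τ.card = k → IsOpen (⋂ i ∈ τ, A i)) :
    IsOpen (levelRegion A k τ) := by
  by_cases hτ : τ.card = k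
  · exact levelRegion_of_card_eq (A := A) hτ ▸ h hτ
  · simp [levelRegion, hτ]

variable {b : ℕ} [TopologicalSpace α] {w : NerveTop A k × Fin b → α}

/-- The path component of the point `w v` in its face. -/
def faceComponent (w : NerveTop A k × Fin b → α) (v : NerveTop A k × Fin b) : Set α :=
  pathComponentIn (⋂ i ∈ v.1.1, A i) (w v)

/-- The chosen points that come first among those in their path component of their face. -/
noncomputable def leadingPoints (w : NerveTop A k × Fin b → α) : Finset (NerveTop A k × Fin b) :=
  (toFinite {v | ∀ j, w (v.1, j) ∈ faceComponent w v → v.2 ≤ j}).toFinset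

theorem faceComponent_subset (v : NerveTop A k × Fin b) :
    faceComponent w v ⊆ ⋂ i ∈ v.1.1, A i :=
  pathComponentIn_subset

theorem pairwiseDisjoint_faceComponent (h : fNum A (k + 1) = 0) :
    (leadingPoints w : Set (NerveTop A k × Fin b)).PairwiseDisjoint (faceComponent w) := by
  rintro ⟨p, i⟩ hi ⟨q, j⟩ hj hne
  refine Set.disjoint_left.2 fun x hx hx' => hne ?_
  have hxp := faceComponent_subset _ hx
  have hxq := faceComponent_subset _ hx'
  obtain rfl : p = q := Subtype.ext <| Finset.Subset.antisymm
    (subset_of_mem_biInter h q.2.1 hxp hxq) (subset_of_mem_biInter h p.2.1 hxq hxp)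
  simp only [leadingPoints, Finite.coe_toFinset, mem_ofPred_eq] at hi hj
  have hij : JoinedIn (⋂ i ∈ p.1, A i) (w (p, i)) (w (p, j)) := hx.trans hx'.symm
  exact Prod.ext rfl (le_antisymm (hi j hij) (hj i hij.symm))

theorem exists_mem_faceComponent (p : NerveTop A k)
    (hwcover : ∃ j, JoinedIn (⋂ i ∈ p.1, A i) x (w (p, j))) :
    ∃ v ∈ leadingPoints w, x ∈ faceComponent w v := by
  obtain ⟨j, hj, hmin⟩ :=
    exists_min_image {j | JoinedIn (⋂ i ∈ p.1, A i) x (w (p, j))} id (toFinite _) hwcover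
  refine ⟨(p, j), ?_, hj.symm⟩
  simp only [leadingPoints, Finite.mem_toFinset]
  exact fun j' hj' => hmin j' (hj.trans hj')

theorem isHubSystem_faceComponent [LocallyPathConnectedSpace α] (h : fNum A (k + 1) = 0)
    (hA : ∀ p : NerveTop A k, IsOpen (⋂ i ∈ p.1, A i)) (hw : ∀ v, w v ∈ ⋂ i ∈ v.1.1, A i)
    (hwcover : ∀ p : NerveTop A k, ∀ x ∈ ⋂ i ∈ p.1, A i,
      ∃ j, JoinedIn (⋂ i ∈ p.1, A i) x (w (p, j))) :
    IsHubSystem w (levelRegion A k) (leadingPoints w) (faceComponent w) where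
  isOpen v _ := (hA v.1).pathComponentIn _
  isConnected v _ := (isPathConnected_pathComponentIn (hw v)).isConnected
  mem v _ := mem_pathComponentIn_self (hw v)
  pairwiseDisjoint := pairwiseDisjoint_faceComponent h
  subset_region := by
    rintro v - τ ⟨x, hxv, hxτ, hτ⟩ y hy
    have hsub := subset_of_mem_biInter h v.1.2.1 hxτ (faceComponent_subset v hxv)
    exact ⟨biInter_subset_biInter_left hsub (faceComponent_subset v hy), hτ⟩
  inter_subset := by
    rintro τ τ' hne x ⟨⟨hxτ, hτ⟩, hxτ', hτ'⟩
    have hx : x ∈ ⋂ i ∈ τ ∪ τ', A i := (Finset.set_biInter_inter τ τ' A).symm ▸ ⟨hxτ, hxτ'⟩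
    have hcard : (τ ∪ τ').card = k + 1 :=
      (card_le_of_fNum_eq_zero h hx).antisymm (succ_le_card_union hτ hτ' hne)
    obtain ⟨v, hv, hxv⟩ := exists_mem_faceComponent _ (hwcover ⟨_, hcard, x, hx⟩ x hx)
    exact mem_biUnion hv hxv

theorem exists_isGraphDrawing_levelRegion {n k b : ℕ} {A : Fin n → Set Plane}
    {w : NerveTop A k × Fin b → Plane} (h : fNum A (k + 1) = 0)
    (hA : ∀ σ : Finset (Fin n), σ.card = k ∨ σ.card = k + 1 → IsOpen (⋂ i ∈ σ, A i))
    (hw : ∀ v, w v ∈ ⋂ i ∈ v.1.1, A i) (hwinj : Injective w)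
    (hwcover : ∀ p : NerveTop A k, ∀ x ∈ ⋂ i ∈ p.1, A i,
      ∃ j, JoinedIn (⋂ i ∈ p.1, A i) x (w (p, j))) :
    ∃ (T : Finset (Fin n) → SimpleGraph (NerveTop A k × Fin b)) (arc : _ → _ → Set Plane),
      (∀ τ, (T τ).IsAcyclic) ∧
      (∀ τ u v, JoinedIn (levelRegion A k τ) (w u) (w v) → (T τ).Reachable u v) ∧
      IsGraphDrawing w (levelRegion A k) T arc := by
  obtain ⟨D, hD, hreach⟩ := (isHubSystem_faceComponent h (fun p => hA p.1 (.inr p.2.1)) hw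
    hwcover).exists_isDrawing hwinj fun τ => isOpen_levelRegion fun hτ => hA τ (.inl hτ)
  choose T hT hac hTreach using fun τ => (arcGraph D τ).exists_isAcyclic_reachable_eq_le
  obtain ⟨arc, harc⟩ := hD.exists_isGraphDrawing hT
  exact ⟨T, arc, hac, fun τ u v huv => hTreach τ ▸ hreach τ u v huv, harc⟩

end NerveRegions

theorem redrawing_forests_general (b k n : ℕ) (A : Fin n → Set (EuclideanSpace ℝ (Fin 2)))
    (h1 : fNum A (k + 1) = 0)
    (h2 : ∀ σ : Finset (Fin n), σ.card = k ∨ σ.card = k + 1 → IsOpen (⋂ i ∈ σ, A i))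
    (w : NerveTop A k → Fin b → EuclideanSpace ℝ (Fin 2))
    (hw : ∀ (p : NerveTop A k) (j : Fin b), w p j ∈ ⋂ i ∈ p.1, A i)
    (hwinj : Function.Injective fun q : NerveTop A k × Fin b => w q.1 q.2)
    (hwcover : ∀ (p : NerveTop A k), ∀ x ∈ ⋂ i ∈ p.1, A i,
      ∃ j : Fin b, JoinedIn (⋂ i ∈ p.1, A i) x (w p j)) :
    ∃ (T : Finset (Fin n) → SimpleGraph (NerveTop A k × Fin b))
      (arc : Finset (Fin n) → Sym2 (NerveTop A k × Fin b) →
        Set (EuclideanSpace ℝ (Fin 2))),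
      (∀ τ : Finset (Fin n), τ.card ≠ k → T τ = ⊥) ∧
      (∀ (τ : Finset (Fin n)) (p q : NerveTop A k × Fin b), (T τ).Adj p q →
        τ ⊆ p.1.1 ∧ τ ⊆ q.1.1 ∧
          JoinedIn (⋂ i ∈ τ, A i) (w p.1 p.2) (w q.1 q.2)) ∧
      (∀ τ : Finset (Fin n), τ.card = k → ∀ p : NerveTop A k × Fin b, τ ⊆ p.1.1 →
        ((T τ).induce {q : NerveTop A k × Fin b | τ ⊆ q.1.1 ∧
          JoinedIn (⋂ i ∈ τ, A i) (w p.1 p.2) (w q.1 q.2)}).IsTree) ∧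
      (∀ (τ : Finset (Fin n)) (p q : NerveTop A k × Fin b), (T τ).Adj p q →
        (∃ γ : Path (w p.1 p.2) (w q.1 q.2),
          Function.Injective ⇑γ ∧ Set.range ⇑γ = arc τ s(p, q)) ∧
          arc τ s(p, q) ⊆ ⋂ i ∈ τ, A i) ∧
      (∀ (τ : Finset (Fin n)), ∀ e ∈ (T τ).edgeSet, ∀ v : NerveTop A k × Fin b,
        w v.1 v.2 ∈ arc τ e → v ∈ e) ∧
      (∀ (τ τ' : Finset (Fin n)), ∀ e ∈ (T τ).edgeSet, ∀ e' ∈ (T τ').edgeSet,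
        (τ, e) ≠ (τ', e') →
        (arc τ e \ (fun q : NerveTop A k × Fin b => w q.1 q.2) '' {x | x ∈ e}) ∩
          (arc τ' e' \ (fun q : NerveTop A k × Fin b => w q.1 q.2) '' {x | x ∈ e'})
          = ∅) ∧
      (∑ τ ∈ Finset.univ.filter (fun τ : Finset (Fin n) => τ.card = k),
          Nat.card (T τ).edgeSet)
        ≤ 3 * (b * fNum A k) + k * (b - 1) * fNum A k := by
  obtain ⟨T, arc, hac, hTreach, hT⟩ :=
    exists_isGraphDrawing_levelRegion (w := fun q => w q.1 q.2) h1 h2 (fun q => hw q.1 q.2) hwinj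
      hwcover
  have hsub (τ) (x) (q : NerveTop A k × Fin b) (h : JoinedIn (⋂ i ∈ τ, A i) x (w q.1 q.2)) :
      τ ⊆ q.1.1 := subset_of_mem_biInter h1 q.1.2.1 h.target_mem (hw q.1 q.2)
  have hadj (τ p q) (h : (T τ).Adj p q) :
      τ.card = k ∧ τ ⊆ p.1.1 ∧ τ ⊆ q.1.1 ∧ JoinedIn (⋂ i ∈ τ, A i) (w p.1 p.2) (w q.1 q.2) := by
    obtain ⟨hτ, hpq⟩ := joinedIn_levelRegion_iff.1 (hT.joinedIn_of_adj h)
    exact ⟨hτ, hsub τ _ p hpq.symm, hsub τ _ q hpq, hpq⟩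
  refine ⟨T, arc, fun τ hτ => ?_, fun τ p q h => (hadj τ p q h).2, fun τ hτ p hp => ?_,
    fun τ p q h => ⟨hT.isArc τ p q h, (hT.subset τ _ h).trans (Set.sep_subset _ _)⟩,
    hT.mem_of_mem, fun τ τ' e he e' he' => hT.sdiff_inter_sdiff_eq_empty he he', ?_⟩
  · exact SimpleGraph.eq_bot_iff_forall_not_adj.2 fun p q h => hτ (hadj τ p q h).1
  · have hcomp : {q : NerveTop A k × Fin b | τ ⊆ q.1.1 ∧
        JoinedIn (⋂ i ∈ τ, A i) (w p.1 p.2) (w q.1 q.2)} =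
        {q | JoinedIn (levelRegion A k τ) (w p.1 p.2) (w q.1 q.2)} :=
      Set.ext fun q => by simpa [joinedIn_levelRegion_iff, hτ] using hsub τ _ q
    rw [hcomp]
    exact hT.isTree_induce (hac τ) ⟨Set.biInter_subset_biInter_left hp (hw p.1 p.2), hτ⟩
      (hTreach τ p)
  · have hcount := sum_card_edgeSet_le_of_weaklyPlanar Subtype.val_injective
      (fun p : NerveTop A k => p.2.1) (F := {τ | τ.card = k}) (by simp) hac
      (fun τ p q h => (hadj τ p q h).2.1) hT.weaklyPlanar
    rwa [Nat.card_fin] at hcount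

/-- **Proposition (redrawing, general b).** Let `b ≥ 2`, `k > 2b`, and let `𝒜` satisfy
`f_{k+1}(𝒜) = 0` with every `k`-wise and `(k+1)`-wise intersection open with at most
`b` path-connected components. Choose, for each `(k+1)`-element face `σ` of the nerve,
`b` pairwise distinct points `w σ 0, …, w σ (b-1)` of `A_σ` hitting every path-connected
component of `A_σ` (all chosen points being pairwise distinct, so the set `W` of chosen
points has `|W| = b·f_k(𝒜)` elements). Then one can choose for every `k`-element `τ`
a forest `T τ` on the chosen points lying in `A_τ`, whose restriction to (the chosen
points in) each path-connected component of `A_τ` is a tree, together with a drawing of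
`T τ` inside `A_τ`, such that the union multigraph `G = ⋃_τ T τ` on the vertex set `W`
admits a crossing-free drawing inside `⋃ 𝒜` (so `G` is a planar multigraph) and
`|E(G)| ≤ 3|W| + k(b-1)·f_k(𝒜)`. -/
theorem redrawing_forests (b k n : ℕ) (hb : 2 ≤ b) (hk : 2 * b < k)
    (A : Fin n → Set (EuclideanSpace ℝ (Fin 2)))
    (h1 : fNum A (k + 1) = 0)
    (h2 : ∀ σ : Finset (Fin n), σ.card = k ∨ σ.card = k + 1 →
      IsOpen (⋂ i ∈ σ, A i) ∧ AtMostComponents b (⋂ i ∈ σ, A i))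
    (w : NerveTop A k → Fin b → EuclideanSpace ℝ (Fin 2))
    (hw : ∀ (p : NerveTop A k) (j : Fin b), w p j ∈ ⋂ i ∈ p.1, A i)
    (hwinj : Function.Injective fun q : NerveTop A k × Fin b => w q.1 q.2)
    (hwcover : ∀ (p : NerveTop A k), ∀ x ∈ ⋂ i ∈ p.1, A i,
      ∃ j : Fin b, JoinedIn (⋂ i ∈ p.1, A i) x (w p j)) :
    ∃ (T : Finset (Fin n) → SimpleGraph (NerveTop A k × Fin b))
      (arc : Finset (Fin n) → Sym2 (NerveTop A k × Fin b) →
        Set (EuclideanSpace ℝ (Fin 2))),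
      -- only `k`-element sets `τ` carry a graph
      (∀ τ : Finset (Fin n), τ.card ≠ k → T τ = ⊥) ∧
      -- edges of `T τ` join only chosen points lying in `A_τ`, and only points in the
      -- same path-connected component of `A_τ`
      (∀ (τ : Finset (Fin n)) (p q : NerveTop A k × Fin b), (T τ).Adj p q →
        τ ⊆ p.1.1 ∧ τ ⊆ q.1.1 ∧
          JoinedIn (⋂ i ∈ τ, A i) (w p.1 p.2) (w q.1 q.2)) ∧
      -- the restriction of the forest `T τ` to the chosen points in any path-connected
      -- component of `A_τ` is a tree on those points
      (∀ τ : Finset (Fin n), τ.card = k → ∀ p : NerveTop A k × Fin b, τ ⊆ p.1.1 →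
        ((T τ).induce {q : NerveTop A k × Fin b | τ ⊆ q.1.1 ∧
          JoinedIn (⋂ i ∈ τ, A i) (w p.1 p.2) (w q.1 q.2)}).IsTree) ∧
      -- every edge of `T τ` is drawn as an arc (image of an injective path) lying
      -- inside `A_τ` (hence inside `⋃ 𝒜`)
      (∀ (τ : Finset (Fin n)) (p q : NerveTop A k × Fin b), (T τ).Adj p q →
        (∃ γ : Path (w p.1 p.2) (w q.1 q.2),
          Function.Injective ⇑γ ∧ Set.range ⇑γ = arc τ s(p, q)) ∧
          arc τ s(p, q) ⊆ ⋂ i ∈ τ, A i) ∧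
      -- arcs meet the vertex points of `G` only at their own endpoints
      (∀ (τ : Finset (Fin n)), ∀ e ∈ (T τ).edgeSet, ∀ v : NerveTop A k × Fin b,
        w v.1 v.2 ∈ arc τ e → v ∈ e) ∧
      -- interiors of arcs of distinct (labelled) edges of the multigraph `G` are
      -- pairwise disjoint, so the union drawing of `G` is crossing-free
      (∀ (τ τ' : Finset (Fin n)), ∀ e ∈ (T τ).edgeSet, ∀ e' ∈ (T τ').edgeSet,
        (τ, e) ≠ (τ', e') →
        (arc τ e \ (fun q : NerveTop A k × Fin b => w q.1 q.2) '' {x | x ∈ e}) ∩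
          (arc τ' e' \ (fun q : NerveTop A k × Fin b => w q.1 q.2) '' {x | x ∈ e'})
          = ∅) ∧
      -- the multigraph `G` has at most `3|W| + k(b-1)·f_k(𝒜)` edges, where
      -- `|W| = b·f_k(𝒜)`
      (∑ τ ∈ Finset.univ.filter (fun τ : Finset (Fin n) => τ.card = k),
          Nat.card (T τ).edgeSet)
        ≤ 3 * (b * fNum A k) + k * (b - 1) * fNum A k :=
  redrawing_forests_general b k n A h1 (fun σ hσ => (h2 σ hσ).1) w hw hwinj hwcover
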